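/- Local upper bound: for every μ ∈ 𝒫, lim_{ε→0} limsup_{n→∞} (1/n²) log P( d(L_n, μ) ≤ ε ) ≤ −(1/2) ∬ f(z,w) dμ(z)dμ(w), where d is the Lévy–Prokhorov metric on M_1(ℂ). -/

import Mathlib

open MeasureTheory ProbabilityTheory Filter Polynomial
open scoped ENNReal NNReal Classical

noncomputable section

/-- Polynomials of positive degree with all coefficients real and strictly positive. -/
def polPos (p : Polynomial ℂ) : Prop :=
  0 < p.natDegree ∧ ∀ i ≤ p.natDegree, (p.coeff i).im = 0 ∧ 0 < (p.coeff i).re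

/-- Empirical measure of the zeros of a polynomial (counted with multiplicity). -/
def zeroMeasure (p : Polynomial ℂ) : Measure ℂ :=
  (p.natDegree : ℝ≥0∞)⁻¹ • (p.roots.map MeasureTheory.Measure.dirac).sum

/-- The closure of the set of empirical zero measures of polynomials with positive
coefficients, inside the space of probability measures with the weak topology. -/
def calP : Set (ProbabilityMeasure ℂ) :=
  closure {μ : ProbabilityMeasure ℂ |
    ∃ p : Polynomial ℂ, polPos p ∧ (μ : Measure ℂ) = zeroMeasure p}

/-- The kernel f(z,w) = log|1-z| + log|1-w| - log|z-w|. -/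
def fker (z w : ℂ) : ℝ :=
  Real.log ‖1 - z‖ + Real.log ‖1 - w‖
    - Real.log ‖z - w‖

/-- The double integral ∬ f dμ dμ, as an extended real number: the (Lebesgue)
integral of the positive part minus that of the negative part. -/
def doubleInt (μ : Measure ℂ) : EReal :=
  ((∫⁻ q : ℂ × ℂ, ENNReal.ofReal (fker q.1 q.2) ∂(μ.prod μ) : ℝ≥0∞) : EReal)
    - ((∫⁻ q : ℂ × ℂ, ENNReal.ofReal (-(fker q.1 q.2)) ∂(μ.prod μ) : ℝ≥0∞) : EReal)

/-- The large deviations rate function. -/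
def rateI (μ : ProbabilityMeasure ℂ) : EReal :=
  if μ ∈ calP then (2 : EReal)⁻¹ * doubleInt (μ : Measure ℂ) else ⊤

end

noncomputable section

/-- The random polynomial `P_n(z) = ∑_{j=0}^n ξ_j z^j` built from real coefficients. -/
def randPoly {Ω : Type*} (ξ : ℕ → Ω → ℝ) (n : ℕ) (ω : Ω) : Polynomial ℂ :=
  ∑ j ∈ Finset.range (n + 1), Polynomial.C ((ξ j ω : ℝ) : ℂ) * Polynomial.X ^ j

end

noncomputable section Alg

open Matrix

/-- factor -/
def fac (y : ℂ) : ℂ[X] := C (1 + y) - C y * X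

def Qy {n : ℕ} (s : ℂ) (y : Fin n → ℂ) : ℂ[X] := C s * ∏ j, fac (y j)

def Ry {n : ℕ} (s : ℂ) (y : Fin n → ℂ) : Fin (n+1) → ℂ[X] :=
  Fin.cons (∏ j, fac (y j)) (fun j => C s * (1 - X) * ∏ i ∈ Finset.univ.erase j, fac (y i))

def Cmat {n : ℕ} (s : ℂ) (y : Fin n → ℂ) : Matrix (Fin (n+1)) (Fin (n+1)) ℂ :=
  Matrix.of fun i m => (Ry s y m).coeff i

def Van {n : ℕ} (y : Fin n → ℂ) : ℝ := ∏ i, ∏ j ∈ Finset.Ioi i, ‖y j - y i‖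

lemma fac_natDegree (y : ℂ) : (fac y).natDegree ≤ 1 := by
  unfold fac; compute_degree

lemma fac_eval (y z : ℂ) : (fac y).eval z = 1 + y - y * z := by
  simp [fac]

lemma Ry_natDegree {n : ℕ} (s : ℂ) (y : Fin n → ℂ) (m : Fin (n+1)) :
    (Ry s y m).natDegree < n + 1 := by
  refine Fin.cases ?_ (fun j => ?_) m
  · simp only [Ry, Fin.cons_zero]
    refine lt_of_le_of_lt (Polynomial.natDegree_prod_le _ _) ?_
    refine Nat.lt_succ_of_le ((Finset.sum_le_sum fun i _ => fac_natDegree _).trans ?_)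
    simp
  · simp only [Ry, Fin.cons_succ]
    have h1 : (C s * (1 - X) : ℂ[X]).natDegree ≤ 1 := by compute_degree
    have h2 : (∏ i ∈ Finset.univ.erase j, fac (y i)).natDegree ≤ n - 1 := by
      refine (Polynomial.natDegree_prod_le _ _).trans ?_
      refine (Finset.sum_le_sum fun i _ => fac_natDegree _).trans ?_
      simp [Finset.card_erase_of_mem]
    have := Polynomial.natDegree_mul_le (p := (C s * (1 - X) : ℂ[X])) (q := ∏ i ∈ Finset.univ.erase j, fac (y i))
    have hn : 0 < n := j.pos
    omega

lemma Qy_natDegree {n : ℕ} (s : ℂ) (y : Fin n → ℂ)  :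
    (Qy s y).natDegree < n + 1 := by
  refine lt_of_le_of_lt (Polynomial.natDegree_C_mul_le _ _) ?_
  exact Ry_natDegree s y 0

lemma det_Cmat {n : ℕ} (s : ℂ) (y : Fin n → ℂ) (hy : ∀ j, y j ≠ 0) :
    ‖(Cmat s y).det‖ = ‖s‖ ^ n * Van y := by
  by_cases hinj : Function.Injective y
  · let z : Fin n → ℂ := fun k => 1 + (y k)⁻¹
    let w : Fin (n+1) → ℂ := Fin.cons 1 z
    let d : Fin (n+1) → ℂ := Fin.cons 1 (fun k => s * (-(y k)⁻¹) * ∏ i ∈ Finset.univ.erase k, (1 - y i / y k))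
    have hWC : vandermonde w * Cmat s y = Matrix.diagonal d := by
      ext k m
      have h1 : (vandermonde w * Cmat s y) k m = (Ry s y m).eval (w k) := by
        rw [Polynomial.eval_eq_sum_range' (Ry_natDegree s y m), Matrix.mul_apply, Finset.sum_range]
        refine Finset.sum_congr rfl fun i _ => ?_
        simp [vandermonde, Cmat, mul_comm]
      rw [h1]
      have hz : ∀ k i, (fac (y i)).eval (z k) = 1 - y i / y k := by
        intro k i
        rw [fac_eval]; simp only [z]; ring
      have hz0 : ∀ k, (fac (y k)).eval (z k) = 0 := by
        intro k; rw [hz, div_self (hy k), sub_self]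
      refine Fin.cases ?_ (fun k => ?_) k <;> refine Fin.cases ?_ (fun m => ?_) m
      · simp [Ry, w, d, eval_prod, fac_eval]
      · simp only [Ry, w, d, Fin.cons_succ, Fin.cons_zero]
        rw [Matrix.diagonal_apply_ne _ (Fin.succ_ne_zero _).symm]
        simp
      · simp only [Ry, w, d, Fin.cons_succ, Fin.cons_zero]
        rw [Matrix.diagonal_apply_ne _ (Fin.succ_ne_zero _), eval_prod]
        exact Finset.prod_eq_zero (Finset.mem_univ k) (hz0 k)
      · simp only [Ry, w, Fin.cons_succ]
        by_cases hkm : k = m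
        · subst hkm
          rw [Matrix.diagonal_apply_eq]
          simp only [d, Fin.cons_succ, eval_mul, eval_prod, hz]
          simp [z]
        · rw [Matrix.diagonal_apply_ne _ (by simpa using hkm), eval_mul, eval_prod,
            Finset.prod_eq_zero (i := k) (by simp [hkm]) (hz0 k), mul_zero]
    have hdet := congrArg (fun A => ‖Matrix.det A‖) hWC
    simp only [Matrix.det_mul, norm_mul, Matrix.det_diagonal, Matrix.det_vandermonde] at hdet
    rw [Fin.prod_univ_succ, Fin.prod_univ_succ, Fin.prod_Ioi_zero] at hdet
    simp only [Fin.prod_Ioi_succ, w, d, Fin.cons_succ, Fin.cons_zero, norm_mul, norm_prod, one_mul, Finset.prod_mul_distrib] at hdet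
    have hpair : (∏ k, ∏ i ∈ Finset.univ.erase k, ‖1 - y i / y k‖) =
       (∏ i, ∏ j ∈ Finset.Ioi i, ‖z j - z i‖) * Van y := by
      have := Finset.prod_prod_Ioi_mul_eq_prod_prod_off_diag (fun i k : Fin n => ‖1 - y i / y k‖)
      have h2 : (∏ k, ∏ i ∈ Finset.univ.erase k, ‖1 - y i / y k‖) = ∏ i : Fin n, ∏ j ∈ {i}ᶜ, ‖1 - y j / y i‖ := by
        refine Finset.prod_congr rfl fun i _ => Finset.prod_congr ?_ fun _ _ => rfl
        ext; simp
      rw [h2, ← this, Van, ← Finset.prod_mul_distrib]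
      refine Finset.prod_congr rfl fun i _ => ?_
      rw [← Finset.prod_mul_distrib]
      refine Finset.prod_congr rfl fun j _ => ?_
      rw [← norm_mul, ← norm_mul]
      congr 1
      have := hy i; have := hy j
      simp only [z]; field_simp; ring
    rw [hpair] at hdet
    have hzn : (∏ x, ‖z x - 1‖) = ∏ x, ‖-(y x)⁻¹‖ := by
      simp [z]
    rw [hzn] at hdet
    have hz1 : (∏ x, ‖-(y x)⁻¹‖) ≠ 0 := by
      refine Finset.prod_ne_zero_iff.2 fun i _ => by simp [hy i]
    have hz2 : (∏ i, ∏ j ∈ Finset.Ioi i, ‖z j - z i‖) ≠ 0 := by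
      refine Finset.prod_ne_zero_iff.2 fun i _ => Finset.prod_ne_zero_iff.2 fun j hj => ?_
      have : i ≠ j := (Finset.mem_Ioi.1 hj).ne
      simp only [z, ne_eq, norm_eq_zero, sub_eq_zero, add_right_inj, _root_.inv_inj]
      exact fun h => this (hinj h).symm
    apply mul_left_cancel₀ (mul_ne_zero hz1 hz2)
    rw [hdet]
    simp
    ring
  · have h0 : ∃ a b, a < b ∧ y a = y b := by
      simp only [Function.Injective, not_forall] at hinj
      obtain ⟨a, b, h, hne⟩ := hinj
      rcases lt_or_gt_of_ne hne with h' | h'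
      · exact ⟨a, b, h', h⟩
      · exact ⟨b, a, h', h.symm⟩
    obtain ⟨a, b, hab, hyab⟩ := h0
    have hV : Van y = 0 := by
      refine Finset.prod_eq_zero (Finset.mem_univ a) (Finset.prod_eq_zero (i := b) (by simpa using hab) (by simp [hyab]))
    rw [hV, mul_zero, norm_eq_zero]
    refine Matrix.det_zero_of_column_eq (i := a.succ) (j := b.succ) (by simpa using hab.ne) fun k => ?_
    simp only [Cmat, Matrix.of_apply, Ry, Fin.cons_succ]
    congr 2
    have e1 := Finset.mul_prod_erase (Finset.univ.erase a) (fun i => fac (y i)) (a := b) (by simp [hab.ne'])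
    have e2 := Finset.mul_prod_erase (Finset.univ.erase b) (fun i => fac (y i)) (a := a) (by simp [hab.ne])
    rw [← e1, ← e2, hyab, Finset.erase_right_comm]

end Alg

noncomputable section Vol

open Matrix

abbrev Pat (n : ℕ) := (Fin n → Fin n) × (Fin n → Fin n) × (Fin n → SignType)

def yv {n : ℕ} (π : Pat n) (v : Fin (n+1) → ℝ) (j : Fin n) : ℂ :=
  (v (π.1 j).succ : ℂ) + ((π.2.2 j : SignType) : ℂ) * Complex.I * (v (π.2.1 j).succ : ℂ)

def Upat {n : ℕ} (π : Pat n) : Matrix (Fin (n+1)) (Fin (n+1)) ℂ :=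
  Matrix.of (Fin.cons (Pi.single 0 1) (fun j => Pi.single (π.1 j).succ 1
    + Pi.single (π.2.1 j).succ (((π.2.2 j : SignType) : ℂ) * Complex.I)))

def validPat {n : ℕ} (π : Pat n) : Prop :=
  ∀ (v : Fin (n+1) → ℝ) (i : ℕ), ((Qy (v 0 : ℂ) (yv π v)).coeff i).im = 0

def Phi {n : ℕ} (π : Pat n) (v : Fin (n+1) → ℝ) (i : Fin (n+1)) : ℝ :=
  ((Qy (v 0 : ℂ) (yv π v)).coeff i).re

lemma yv_line {n : ℕ} (π : Pat n) (v : Fin (n+1) → ℝ) (l : Fin (n+1)) (t : ℝ) (j : Fin n) :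
    yv π (v + t • Pi.single l 1) j = yv π v j + t * Upat π j.succ l := by
  simp only [yv, Upat, Matrix.of_apply, Fin.cons_succ, Pi.add_apply, Pi.smul_apply, Pi.single_apply,
    smul_eq_mul]
  simp only [eq_comm (a := l)]
  split_ifs <;> push_cast <;> ring

lemma v0_line {n : ℕ} (π : Pat n) (v : Fin (n+1) → ℝ) (l : Fin (n+1)) (t : ℝ) :
    (((v + t • Pi.single l (1:ℝ) : Fin (n+1) → ℝ) 0 : ℝ) : ℂ) = (v 0 : ℂ) + t * Upat π 0 l := by
  simp only [Upat, Matrix.of_apply, Fin.cons_zero, Pi.add_apply, Pi.smul_apply, Pi.single_apply,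
    smul_eq_mul]
  by_cases h1 : l = 0
  · simp [h1]
  · simp [h1, Ne.symm h1]

lemma Upat_norm {n : ℕ} (π : Pat n) (i l : Fin (n+1)) : ‖Upat π i l‖ ≤ 2 := by
  refine Fin.cases ?_ (fun j => ?_) i
  · simp only [Upat, Matrix.of_apply, Fin.cons_zero, Pi.single_apply]
    split_ifs <;> norm_num
  · simp only [Upat, Matrix.of_apply, Fin.cons_succ, Pi.add_apply, Pi.single_apply]
    have h : ‖((π.2.2 j : SignType) : ℂ) * Complex.I‖ ≤ 1 := by
      rcases (π.2.2 j) <;> simp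
    refine (norm_add_le _ _).trans ?_
    have : ∀ (p q : Prop) [Decidable p] [Decidable q] (a b : ℂ), ‖a‖ ≤ 1 → ‖b‖ ≤ 1 →
      ‖(if p then a else 0)‖ + ‖(if q then b else 0)‖ ≤ 2 := by
      intro p q _ _ a b ha hb
      split_ifs <;> (try simp only [norm_zero]) <;> linarith
    exact this _ _ _ _ (by simp) h

lemma Upat_det {n : ℕ} (π : Pat n) : ‖(Upat π).det‖ ≤ (n+1).factorial * 2 ^ (n+1) := by
  have := Matrix.det_le (A := Upat π) (abv := (NormedField.toAbsoluteValue ℂ)) (x := 2) (fun i j => Upat_norm π i j)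
  have h2 : ‖(Upat π).det‖ ≤ (Fintype.card (Fin (n+1))).factorial • (2:ℝ) ^ (Fintype.card (Fin (n+1))) := this
  simpa using h2

lemma coeff_diff {n : ℕ} (π : Pat n) (i : ℕ) :
    Differentiable ℝ (fun v : Fin (n+1) → ℝ => (Qy (v 0 : ℂ) (yv π v)).coeff i) := by
  have hy : ∀ j, Differentiable ℝ (fun v : Fin (n+1) → ℝ => yv π v j) := by
    intro j
    have h : ∀ k, Differentiable ℝ (fun v : Fin (n+1) → ℝ => ((v k : ℝ) : ℂ)) := by
      intro k
      exact Complex.ofRealCLM.differentiable.comp (differentiable_apply k)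
    unfold yv
    exact (h _).add ((h _).const_mul _)
  have key : ∀ (S : Finset (Fin n)) (i : ℕ),
      Differentiable ℝ (fun v : Fin (n+1) → ℝ => (∏ j ∈ S, fac (yv π v j)).coeff i) := by
    intro S
    induction S using Finset.induction_on with
    | empty => intro i; simp
    | insert a S ha ih =>
      intro i
      simp only [Finset.prod_insert ha, Polynomial.coeff_mul]
      refine Differentiable.fun_sum fun p _ => Differentiable.mul ?_ (ih _)
      simp only [fac, coeff_sub, coeff_C_mul, coeff_C, coeff_X]
      have hya := hy a
      split_ifs <;> fun_prop
  simp only [Qy, coeff_C_mul]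
  refine Differentiable.mul ?_ (key _ _)
  exact Complex.ofRealCLM.differentiable.comp (differentiable_apply 0)

lemma Phi_diff {n : ℕ} (π : Pat n) : Differentiable ℝ (Phi π) := by
  rw [differentiable_pi]
  intro i
  exact Complex.reCLM.differentiable.comp (coeff_diff π i)

lemma Phi_eval {n : ℕ} (π : Pat n) (hπ : validPat π) (v : Fin (n+1) → ℝ) (z : ℂ) :
    ∑ i, (Phi π v i : ℂ) * z ^ (i : ℕ) = (v 0 : ℂ) * ∏ j, (1 + yv π v j - yv π v j * z) := by
  have : (Qy (v 0 : ℂ) (yv π v)).eval z = (v 0 : ℂ) * ∏ j, (1 + yv π v j - yv π v j * z) := by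
    simp [Qy, eval_prod, fac_eval]
  rw [← this, Polynomial.eval_eq_sum_range' (Qy_natDegree _ _), Finset.sum_range]
  refine Finset.sum_congr rfl fun i _ => ?_
  congr 1
  apply Complex.ext <;> simp [Phi, hπ v i]

lemma Phi_deriv {n : ℕ} (π : Pat n) (hπ : validPat π) (v : Fin (n+1) → ℝ) :
    (LinearMap.toMatrix' ((fderiv ℝ (Phi π) v : (Fin (n+1) → ℝ) →L[ℝ] (Fin (n+1) → ℝ)) : (Fin (n+1) → ℝ) →ₗ[ℝ] (Fin (n+1) → ℝ))).map
      Complex.ofRealHom = Cmat (v 0 : ℂ) (yv π v) * Upat π := by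
  set L := fderiv ℝ (Phi π) v with hL
  ext i l
  have hline : ∀ i, HasDerivAt (fun t : ℝ => (Phi π (v + t • Pi.single l 1) i : ℂ)) ((L (Pi.single l 1) i : ℝ) : ℂ) 0 := by
    intro i
    have h1 : HasDerivAt (fun t : ℝ => v + t • Pi.single l (1:ℝ)) (Pi.single l 1) 0 := by
      simpa using ((hasDerivAt_id (0:ℝ)).smul_const (Pi.single l (1:ℝ) : Fin (n+1) → ℝ)).const_add v
    have h2 : HasFDerivAt (Phi π) L (v + (0:ℝ) • Pi.single l (1:ℝ)) := by
      rw [zero_smul, add_zero]; exact (Phi_diff π v).hasFDerivAt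
    have h3 := h2.comp_hasDerivAt (0:ℝ) h1
    exact (hasDerivAt_pi.1 h3 i).ofReal_comp
  have hz : ∀ z : ℂ, ∑ i, ((L (Pi.single l 1) i : ℝ) : ℂ) * z ^ (i : ℕ)
      = ∑ m, (Ry (v 0 : ℂ) (yv π v) m).eval z * Upat π m l := by
    intro z
    have ha : HasDerivAt (fun t : ℝ => ∑ i, (Phi π (v + t • Pi.single l 1) i : ℂ) * z ^ (i : ℕ))
        (∑ i, ((L (Pi.single l 1) i : ℝ) : ℂ) * z ^ (i : ℕ)) 0 :=
      HasDerivAt.fun_sum fun i _ => (hline i).mul_const _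
    simp only [Phi_eval π hπ, yv_line, v0_line π] at ha
    have hofR : HasDerivAt (fun t : ℝ => (t : ℂ)) 1 0 := by
      simpa using (hasDerivAt_id (0:ℝ)).ofReal_comp
    have hb0 : HasDerivAt (fun t : ℝ => (v 0 : ℂ) + t * Upat π 0 l) (Upat π 0 l) 0 := by
      simpa using (hofR.mul_const (Upat π 0 l)).const_add (v 0 : ℂ)
    have hbj : ∀ j ∈ (Finset.univ : Finset (Fin n)), HasDerivAt (fun t : ℝ => 1 + (yv π v j + t * Upat π j.succ l) -
        (yv π v j + t * Upat π j.succ l) * z) ((1 - z) * Upat π j.succ l) 0 := by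
      intro j _
      have h1 : HasDerivAt (fun t : ℝ => yv π v j + t * Upat π j.succ l) (Upat π j.succ l) 0 := by
        simpa using (hofR.mul_const (Upat π j.succ l)).const_add (yv π v j)
      have h2 := (h1.const_add 1).sub (h1.mul_const z)
      rw [show Upat π j.succ l - Upat π j.succ l * z = (1 - z) * Upat π j.succ l by ring] at h2
      exact h2
    have hb := hb0.mul (HasDerivAt.fun_finsetProd hbj)
    have := ha.unique hb
    rw [this, Fin.sum_univ_succ]
    simp only [Ry, Fin.cons_zero, Fin.cons_succ, eval_mul, eval_prod, fac_eval, Complex.ofReal_zero, zero_mul, add_zero, smul_eq_mul, Finset.mul_sum, eval_C, eval_sub, eval_one, eval_X]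
    congr 1
    · ring
    · refine Finset.sum_congr rfl fun j _ => ?_
      ring
  have hpoly : (∑ i : Fin (n+1), C ((L (Pi.single l 1) i : ℝ) : ℂ) * X ^ (i : ℕ) : ℂ[X])
      = ∑ m, Ry (v 0 : ℂ) (yv π v) m * C (Upat π m l) := by
    refine Polynomial.funext fun z => ?_
    simpa [eval_finsetSum] using hz z
  have hc := congrArg (fun q : ℂ[X] => q.coeff i) hpoly
  simp only [finsetSum_coeff, coeff_C_mul, coeff_mul_C, coeff_X_pow] at hc
  rw [Finset.sum_eq_single i] at hc
  · simpa [LinearMap.toMatrix'_apply, Matrix.mul_apply, Cmat] using hc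
  · intro b _ hb
    have : (i : ℕ) ≠ b := fun h => hb (Fin.ext h.symm)
    simp [this]
  · simp

lemma Phi_det {n : ℕ} (π : Pat n) (hπ : validPat π) (v : Fin (n+1) → ℝ) (hy : ∀ j, yv π v j ≠ 0) :
    |(fderiv ℝ (Phi π) v).det| ≤ |v 0| ^ n * Van (yv π v) * ((n+1).factorial * 2 ^ (n+1)) := by
  have h := Phi_deriv π hπ v
  have h2 := congrArg (fun A => ‖Matrix.det A‖) h
  simp only [Matrix.det_mul, norm_mul, det_Cmat _ _ hy] at h2
  rw [← RingHom.mapMatrix_apply, ← RingHom.map_det, LinearMap.det_toMatrix'] at h2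
  have h3 : |(fderiv ℝ (Phi π) v).det| = |v 0| ^ n * Van (yv π v) * ‖(Upat π).det‖ := by
    simpa using h2
  rw [h3]
  refine mul_le_mul_of_nonneg_left (Upat_det π) ?_
  unfold Van
  positivity

end Vol

noncomputable section VolImg

def Dset {n : ℕ} (π : Pat n) (S B E : ℝ) : Set (Fin (n+1) → ℝ) :=
  {v | v ∈ Set.Icc (Fin.cons 0 (fun _ => -B)) (Fin.cons S (fun _ => B)) ∧
    (∀ j, yv π v j ≠ 0) ∧ Van (yv π v) ≤ E}

lemma yv_cont {n : ℕ} (π : Pat n) (j : Fin n) : Continuous (fun v => yv π v j) := by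
  unfold yv; fun_prop

lemma Dset_meas {n : ℕ} (π : Pat n) (S B E : ℝ) : MeasurableSet (Dset π S B E) := by
  have h := yv_cont π
  refine measurableSet_Icc.inter (MeasurableSet.inter ?_ ?_)
  · have : {v : Fin (n+1) → ℝ | ∀ j, yv π v j ≠ 0} = ⋂ j, {v | yv π v j ≠ 0} := by ext; simp
    change MeasurableSet {v : Fin (n+1) → ℝ | ∀ j, yv π v j ≠ 0}
    rw [this]
    refine MeasurableSet.iInter fun j => (isOpen_ne_fun (h j) continuous_const).measurableSet
  · have hc : Continuous (fun v : Fin (n+1) → ℝ => Van (yv π v)) := by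
      unfold Van; fun_prop
    exact (isClosed_le hc continuous_const).measurableSet

lemma vol_image {n : ℕ} (π : Pat n) (hπ : validPat π) (S B E : ℝ) (hS : 0 ≤ S) (hB : 0 ≤ B) (hE : 0 ≤ E) :
    volume (Phi π '' Dset π S B E) ≤
      ENNReal.ofReal (S ^ n * E * ((n+1).factorial * 2 ^ (n+1)) * (S * (2 * B) ^ n)) := by
  have h1 := addHaar_image_le_lintegral_abs_det_fderiv (volume : Measure (Fin (n+1) → ℝ))
    (Dset_meas π S B E) (f := Phi π) (f' := fderiv ℝ (Phi π))
    (fun x _ => (Phi_diff π x).hasFDerivAt.hasFDerivWithinAt)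
  refine h1.trans ?_
  have h2 : ∀ v ∈ Dset π S B E, ENNReal.ofReal |(fderiv ℝ (Phi π) v).det| ≤
      ENNReal.ofReal (S ^ n * E * ((n+1).factorial * 2 ^ (n+1))) := by
    intro v hv
    refine ENNReal.ofReal_le_ofReal ((Phi_det π hπ v hv.2.1).trans ?_)
    have h0 : 0 ≤ v 0 := by simpa using hv.1.1 0
    have h0' : v 0 ≤ S := by simpa using hv.1.2 0
    have hE := hv.2.2
    have : 0 ≤ Van (yv π v) := by unfold Van; positivity
    rw [abs_of_nonneg h0]
    gcongr
  refine (setLIntegral_mono_ae (by fun_prop) (Filter.Eventually.of_forall h2)).trans ?_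
  rw [setLIntegral_const, ENNReal.ofReal_mul (p := S ^ n * E * ((n+1).factorial * 2 ^ (n+1))) (by positivity)]
  refine mul_le_mul' le_rfl ?_
  refine (measure_mono (fun v hv => hv.1)).trans ?_
  rw [Real.volume_Icc_pi, Fin.prod_univ_succ, ENNReal.ofReal_mul hS, ENNReal.ofReal_pow (by positivity)]
  simp [two_mul]

end VolImg

noncomputable section Enum

lemma pat_exists (n : ℕ) (Ys : Multiset ℂ) (hcard : Ys.card = n)
    (hconj : Ys.map (starRingEnd ℂ) = Ys) (s : ℝ) :
    ∃ π : Pat n, validPat π ∧ ∃ v : Fin (n+1) → ℝ, v 0 = s ∧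
      (∀ l : Fin n, ∃ j, |v l.succ| ≤ ‖yv π v j‖) ∧
      Finset.univ.val.map (yv π v) = Ys := by
  set R := Ys.filter (fun z => z.im = 0) with hR
  set S := Ys.filter (fun z => 0 < z.im) with hS
  set T := Ys.filter (fun z => z.im < 0) with hT
  have hST : T = S.map (starRingEnd ℂ) := by
    rw [hT, hS]
    conv_lhs => rw [← hconj]
    rw [Multiset.filter_map]
    congr 1
    refine Multiset.filter_congr fun z _ => by simp
  have hsum : Ys = R + (S + T) := by
    have h1 := Multiset.filter_add_not (fun z : ℂ => z.im = 0) Ys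
    have h2 := Multiset.filter_add_not (fun z : ℂ => 0 < z.im) (Ys.filter (fun z => ¬ z.im = 0))
    rw [← h1, ← h2, Multiset.filter_filter, Multiset.filter_filter]
    congr 2
    · rw [hS]
      refine Multiset.filter_congr fun z _ => ?_
      constructor
      · rintro ⟨h, _⟩; exact h
      · exact fun h => ⟨h, h.ne'⟩
    · rw [hT]
      refine Multiset.filter_congr fun z _ => ?_
      constructor
      · rintro ⟨h, h'⟩; exact lt_of_le_of_ne (not_lt.1 h) h'
      · exact fun h => ⟨not_lt.2 h.le, h.ne⟩
  set r := R.toList with hr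
  set sl := S.toList with hsl
  let ι := Fin r.length ⊕ (Fin sl.length ⊕ Fin sl.length)
  have hcι : Fintype.card ι = n := by
    have : Ys.card = R.card + (S.card + T.card) := by
      conv_lhs => rw [hsum]
      simp
    rw [hST, Multiset.card_map] at this
    simp [ι, hr, hsl, ← hcard, this]
  let e : ι ≃ Fin n := Fintype.equivFinOfCardEq hcι
  let αι : ι → ι := Sum.elim Sum.inl (Sum.elim (fun i => Sum.inr (Sum.inl i)) (fun i => Sum.inr (Sum.inl i)))
  let βι : ι → ι := Sum.elim Sum.inl (Sum.elim (fun i => Sum.inr (Sum.inr i)) (fun i => Sum.inr (Sum.inr i)))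
  let ει : ι → SignType := Sum.elim (fun _ => 0) (Sum.elim (fun _ => 1) (fun _ => -1))
  let gι : ι → ℝ := Sum.elim (fun i => (r.get i).re) (Sum.elim (fun i => (sl.get i).re) (fun i => (sl.get i).im))
  let π : Pat n := (fun j => e (αι (e.symm j)), fun j => e (βι (e.symm j)), fun j => ει (e.symm j))
  let Yι : (Fin (n+1) → ℝ) → ι → ℂ := fun v i =>
    (v (e (αι i)).succ : ℂ) + ((ει i : SignType) : ℂ) * Complex.I * (v (e (βι i)).succ : ℂ)
  have hYι : ∀ v j, yv π v j = Yι v (e.symm j) := fun v j => rfl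
  refine ⟨π, ?_, Fin.cons s (fun j => gι (e.symm j)), rfl, ?_, ?_⟩
  · intro v i
    have hQ : (Qy (v 0 : ℂ) (yv π v)).map (starRingEnd ℂ) = Qy (v 0 : ℂ) (yv π v) := by
      have : Qy (v 0 : ℂ) (yv π v) = C (v 0 : ℂ) * ∏ i, fac (Yι v i) := by
        rw [Qy]
        congr 1
        simp only [hYι]
        exact Equiv.prod_comp e.symm (fun i => fac (Yι v i))
      rw [this, Polynomial.map_mul, Polynomial.map_prod]
      have hf : ∀ y : ℂ, (fac y).map (starRingEnd ℂ) = fac (starRingEnd ℂ y) := by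
        intro y; simp [fac]
      simp only [hf, ι, Fintype.prod_sum_type]
      have h1 : ∀ i, starRingEnd ℂ (Yι v (Sum.inl i)) = Yι v (Sum.inl i) := by
        intro i; simp [Yι, ει]
      have h2 : ∀ i, starRingEnd ℂ (Yι v (Sum.inr (Sum.inl i))) = Yι v (Sum.inr (Sum.inr i)) := by
        intro i; simp [Yι, ει, αι, βι]
      have h3 : ∀ i, starRingEnd ℂ (Yι v (Sum.inr (Sum.inr i))) = Yι v (Sum.inr (Sum.inl i)) := by
        intro i; rw [← h2, Complex.conj_conj]
      simp only [h1, h2, h3, Polynomial.map_C, Complex.conj_ofReal]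
      ring
    have := congrArg (fun q : ℂ[X] => q.coeff i) hQ
    simp only [coeff_map] at this
    exact Complex.conj_eq_iff_im.1 this
  all_goals
    set v : Fin (n+1) → ℝ := Fin.cons s (fun j => gι (e.symm j)) with hv
    have hv1 : ∀ i, v (e i).succ = gι i := by intro i; simp [hv]
    have k1 : ∀ i, Yι v (Sum.inl i) = r.get i := by
      intro i
      have : (r.get i).im = 0 := by
        have : r.get i ∈ R := by rw [← Multiset.mem_toList]; exact List.get_mem _ _
        exact (Multiset.mem_filter.1 this).2
      apply Complex.ext
      · simp [Yι, hv1, gι, αι, ει]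
      · simp [Yι, hv1, gι, αι, ει]
        exact this.symm
    have k2 : ∀ i, Yι v (Sum.inr (Sum.inl i)) = sl.get i := by
      intro i
      apply Complex.ext <;> simp [Yι, hv1, gι, αι, βι, ει]
    have k3 : ∀ i, Yι v (Sum.inr (Sum.inr i)) = starRingEnd ℂ (sl.get i) := by
      intro i
      apply Complex.ext <;> simp [Yι, hv1, gι, αι, βι, ει]
  · intro l
    refine ⟨l, ?_⟩
    rw [hYι]
    have : v l.succ = gι (e.symm l) := by rw [← hv1, Equiv.apply_symm_apply]
    rw [this]
    rcases e.symm l with i | i | i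
    · rw [k1]; exact Complex.abs_re_le_norm _
    · rw [k2]; exact Complex.abs_re_le_norm _
    · rw [k3, Complex.norm_conj]; exact Complex.abs_im_le_norm _
  · have hlist : ∀ (l : List ℂ) (f : ℂ → ℂ), ∑ i : Fin l.length, ({f (l.get i)} : Multiset ℂ) = (l : Multiset ℂ).map f := by
      intro l f
      have h1 : ∑ i : Fin l.length, ({f (l.get i)} : Multiset ℂ) = (Finset.univ.val.map (fun i => f (l.get i))) := by
        rw [← Multiset.sum_map_singleton (Finset.univ.val.map (fun i => f (l.get i))), Multiset.map_map]
        rfl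
      rw [h1, show (fun i => f (l.get i)) = f ∘ l.get from rfl, ← Multiset.map_map f l.get, Fin.univ_val_map, List.ofFn_get]
    rw [← Multiset.sum_map_singleton (Finset.univ.val.map (yv π v)), Multiset.map_map]
    change ∑ j, ({yv π v j} : Multiset ℂ) = Ys
    simp only [hYι]
    rw [Equiv.sum_comp e.symm (fun i => ({Yι v i} : Multiset ℂ))]
    simp only [ι, Fintype.sum_sum_type, k1, k2, k3]
    have e1 := hlist r id
    have e2 := hlist sl id
    have e3 := hlist sl (starRingEnd ℂ)
    simp only [id, Multiset.map_id'] at e1 e2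
    rw [e1, e2, e3, hsl, hr, Multiset.coe_toList, Multiset.coe_toList, ← hST, ← hsum]

lemma enum_roots (p : ℂ[X]) (hp : polPos p) :
    ∃ π : Pat p.natDegree, validPat π ∧ ∃ v : Fin (p.natDegree+1) → ℝ, v 0 = (p.eval 1).re ∧
      (∀ l : Fin p.natDegree, ∃ j, |v l.succ| ≤ ‖yv π v j‖) ∧
      (∀ j, yv π v j ≠ 0) ∧ p.roots = Finset.univ.val.map (fun j => 1 + (yv π v j)⁻¹) ∧
      p = Qy (v 0 : ℂ) (yv π v) ∧ 0 < v 0 := by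
  have hpm : p.map (starRingEnd ℂ) = p := by
    ext i
    rw [coeff_map, Complex.conj_eq_iff_im]
    by_cases hi : i ≤ p.natDegree
    · exact (hp.2 i hi).1
    · rw [coeff_eq_zero_of_natDegree_lt (not_le.1 hi)]; simp
  have hp0 : p ≠ 0 := by rintro rfl; simpa using hp.1
  have hev : 0 < (p.eval 1).re ∧ (p.eval 1).im = 0 := by
    rw [eval_eq_sum_range]
    simp only [one_pow, mul_one, Complex.re_sum, Complex.im_sum]
    constructor
    · refine Finset.sum_pos (fun i hi => (hp.2 i ?_).2) ⟨0, by simp⟩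
      simpa [Nat.lt_succ_iff] using hi
    · refine Finset.sum_eq_zero fun i hi => (hp.2 i ?_).1
      simpa [Nat.lt_succ_iff] using hi
  have hsplit : p.Splits := IsAlgClosed.splits p
  have hcard : p.roots.card = p.natDegree := hsplit.natDegree_eq_card_roots.symm
  have hrc : p.roots.map (starRingEnd ℂ) = p.roots := by
    have := hsplit.roots_map (starRingEnd ℂ)
    rw [hpm] at this
    exact this.symm
  have h1 : ∀ z ∈ p.roots, z ≠ 1 := by
    rintro z hz rfl
    have : p.eval 1 = 0 := (mem_roots hp0).1 hz
    rw [this] at hev; simp at hev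
  have hYc : (p.roots.map (fun z => (z - 1)⁻¹)).map (starRingEnd ℂ) = p.roots.map (fun z => (z - 1)⁻¹) := by
    conv_rhs => rw [← hrc]
    rw [Multiset.map_map, Multiset.map_map]
    refine Multiset.map_congr rfl fun z _ => by simp
  obtain ⟨π, hπ, v, hv0, hvl, hY⟩ := pat_exists p.natDegree (p.roots.map (fun z => (z - 1)⁻¹))
    (by rw [Multiset.card_map, hcard]) hYc (p.eval 1).re
  have hroots : p.roots = Finset.univ.val.map (fun j => 1 + (yv π v j)⁻¹) := by
    have := congrArg (Multiset.map (fun y : ℂ => 1 + y⁻¹)) hY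
    rw [Multiset.map_map, Multiset.map_map] at this
    rw [show (fun j => 1 + (yv π v j)⁻¹) = (fun y : ℂ => 1 + y⁻¹) ∘ yv π v from rfl, this]
    conv_lhs => rw [← Multiset.map_id' p.roots]
    refine Multiset.map_congr rfl fun z _ => by simp
  have hy0 : ∀ j, yv π v j ≠ 0 := by
    intro j
    have : yv π v j ∈ p.roots.map (fun z => (z - 1)⁻¹) := by
      rw [← hY]; exact Multiset.mem_map_of_mem _ (Finset.mem_univ_val j)
    obtain ⟨z, hz, hzz⟩ := Multiset.mem_map.1 this
    rw [← hzz]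
    exact inv_ne_zero (sub_ne_zero.2 (h1 z hz))
  refine ⟨π, hπ, v, hv0, hvl, hy0, hroots, ?_, by rw [hv0]; exact hev.1⟩
  have hpe : p.eval 1 = (v 0 : ℂ) := by
    rw [hv0]; apply Complex.ext <;> simp [hev.2]
  have hprod : p = C p.leadingCoeff * ∏ j, (X - C (1 + (yv π v j)⁻¹)) := by
    have := hsplit.eq_prod_roots
    rw [hroots, Multiset.map_map] at this
    exact this
  have hfac : ∀ j, fac (yv π v j) = C (-(yv π v j)) * (X - C (1 + (yv π v j)⁻¹)) := by
    intro j
    have : (yv π v j) * (1 + (yv π v j)⁻¹) = 1 + yv π v j := by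
      have := hy0 j; field_simp; ring
    rw [fac, ← this]
    simp only [C_mul, C_neg, C_add, C_1]
    ring
  have hl := congrArg (fun q : ℂ[X] => q.eval 1) hprod
  simp only [eval_mul, eval_C, eval_prod, eval_sub, eval_X] at hl
  rw [hpe] at hl
  rw [Qy, Finset.prod_congr rfl (fun j _ => hfac j), Finset.prod_mul_distrib, ← mul_assoc, hl, ← map_prod C]
  conv_lhs => rw [hprod]
  congr 1
  rw [← C_mul, mul_assoc, ← Finset.prod_mul_distrib, Finset.prod_eq_one, mul_one]
  intro j _
  have := hy0 j
  field_simp; ring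

end Enum

noncomputable section Mahler

lemma mahler_bound (p : ℂ[X]) (hp : polPos p) (n : ℕ) (hn : p.natDegree = n) (s : ℝ) (hs : 0 < s) (y : Fin n → ℂ)
    (hpQ : p = Qy (s : ℂ) y) (r : ℝ) (hr : 0 ≤ r) :
    ∏ j, max 1 (r * ‖y j‖) ≤ (1 + r) ^ n := by
  let a : ℕ → ℝ := fun i => (p.coeff i).re
  have ha : ∀ i, i ≤ n → (a i : ℂ) = p.coeff i := by
    intro i hi
    apply Complex.ext <;> simp [a, (hp.2 i (hn ▸ hi)).1]
  have ha0 : ∀ i, i ≤ n → 0 ≤ a i := fun i hi => (hp.2 i (hn ▸ hi)).2.le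
  let G : ℝ[X] := ∑ i ∈ Finset.range (n+1), C (a i) * ((X + C r) ^ i * X ^ (n - i))
  let H : ℂ[X] := ∏ j, (X - C ((r : ℂ) * y j))
  have hpe : ∀ z, p.eval z = ∑ i ∈ Finset.range (n+1), (a i : ℂ) * z ^ i := by
    intro z
    rw [eval_eq_sum_range, hn]
    refine Finset.sum_congr rfl fun i hi => ?_
    rw [ha i (by simpa [Nat.lt_succ_iff] using hi)]
  have hpe' : ∀ z, p.eval z = (s : ℂ) * ∏ j, (1 + y j - y j * z) := by
    intro z; rw [hpQ]; simp [Qy, eval_prod, fac_eval]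
  have hGH : G.map Complex.ofRealHom = C (s : ℂ) * H := by
    refine Polynomial.eq_of_infinite_eval_eq _ _ (Set.Infinite.mono (s := {0}ᶜ) ?_ ?_)
    · intro z hz
      have hz : z ≠ 0 := hz
      simp only [Set.mem_ofPred_eq]
      have e1 : (G.map Complex.ofRealHom).eval z = z ^ n * p.eval (1 + r / z) := by
        rw [hpe, Finset.mul_sum]
        simp only [G, Polynomial.map_sum, eval_finsetSum]
        refine Finset.sum_congr rfl fun i hi => ?_
        have hi : i ≤ n := by simpa [Nat.lt_succ_iff] using hi
        simp only [Polynomial.map_mul, Polynomial.map_C, Polynomial.map_pow, Polynomial.map_add, Polynomial.map_X,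
          eval_mul, eval_C, eval_pow, eval_add, eval_X, Complex.ofRealHom_eq_coe]
        have : z ^ n = z ^ i * z ^ (n - i) := by rw [← pow_add]; congr 1; omega
        rw [this]
        have : (z + r) = z * (1 + r / z) := by field_simp
        rw [this, mul_pow]
        ring
      rw [e1, hpe']
      simp only [H, eval_mul, eval_C, eval_prod, eval_sub, eval_X]
      have : z ^ n = ∏ j : Fin n, z := by simp
      rw [this, mul_left_comm, ← Finset.prod_mul_distrib]
      congr 1
      refine Finset.prod_congr rfl fun j _ => ?_
      field_simp
      ring
    · exact (Set.finite_singleton (0:ℂ)).infinite_compl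
  have hG0 : ∀ k, 0 ≤ G.coeff k := by
    intro k
    simp only [G, finsetSum_coeff, coeff_C_mul]
    refine Finset.sum_nonneg fun i hi => ?_
    have hi : i ≤ n := by simpa [Nat.lt_succ_iff] using hi
    refine mul_nonneg (ha0 i hi) ?_
    rw [coeff_mul_X_pow']
    split_ifs
    · rw [coeff_X_add_C_pow]; positivity
    · exact le_rfl
  have hM1 : (C (s : ℂ) * H).mahlerMeasure = s * ∏ j, max 1 (r * ‖y j‖) := by
    rw [mahlerMeasure_mul, mahlerMeasure_const]
    have : H.mahlerMeasure = ∏ j, max 1 (r * ‖y j‖) := by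
      have h := prod_mahlerMeasure_eq_mahlerMeasure_prod ((Finset.univ : Finset (Fin n)).val.map (fun j => X - C ((r : ℂ) * y j)))
      have h' : H = ((Finset.univ : Finset (Fin n)).val.map (fun j => X - C ((r : ℂ) * y j))).prod := rfl
      rw [h', h, Multiset.map_map]
      change ∏ j, _ = _
      refine Finset.prod_congr rfl fun j _ => ?_
      simp only [Function.comp]
      rw [mahlerMeasure_X_sub_C]
      simp [abs_of_nonneg hr]
    rw [this]
    simp [abs_of_pos hs]
  have hM2 := mahlerMeasure_le_sum_norm_coeff (G.map Complex.ofRealHom)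
  have hsum : (G.map Complex.ofRealHom).sum (fun _ a => ‖a‖) = G.eval 1 := by
    rw [Polynomial.sum_over_range' _ (by simp) (G.natDegree + 1) (by
      exact Nat.lt_succ_of_le natDegree_map_le), eval_eq_sum_range]
    refine Finset.sum_congr rfl fun k _ => ?_
    simp [abs_of_nonneg (hG0 k)]
  rw [hsum, hGH, hM1] at hM2
  have hs1 : s = ∑ i ∈ Finset.range (n+1), a i := by
    have h1 := hpe 1
    rw [hpe'] at h1
    simp at h1
    exact_mod_cast h1
  have hG1 : G.eval 1 ≤ s * (1 + r) ^ n := by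
    simp only [G, eval_finsetSum]
    rw [hs1, Finset.sum_mul]
    refine Finset.sum_le_sum fun i hi => ?_
    have hi : i ≤ n := by simpa [Nat.lt_succ_iff] using hi
    simp only [eval_mul, eval_C, eval_pow, eval_add, eval_X, one_pow, mul_one]
    exact mul_le_mul_of_nonneg_left (pow_le_pow_right₀ (by linarith) hi) (ha0 i hi)
  exact le_of_mul_le_mul_left (hM2.trans hG1) hs

end Mahler

noncomputable section Ker

def rat (K δ : ℝ) (q : ℂ × ℂ) : ℝ :=
  (‖q.1 - q.2‖ + δ) / max (‖1 - q.1‖ * ‖1 - q.2‖) ((‖q.1 - q.2‖ + δ) * Real.exp (-K))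

def exK (M K δ : ℝ) (q : ℂ × ℂ) : ℝ := max (Real.exp (-M)) (rat K δ q)

def Gk (M K δ : ℝ) (q : ℂ × ℂ) : ℝ := Real.log (exK M K δ q)

lemma exK_pos (M K δ : ℝ) (q : ℂ × ℂ) : 0 < exK M K δ q :=
  lt_of_lt_of_le (Real.exp_pos _) (le_max_left _ _)

lemma rat_den_pos {K δ : ℝ} (hδ : 0 < δ) (q : ℂ × ℂ) :
    0 < max (‖1 - q.1‖ * ‖1 - q.2‖) ((‖q.1 - q.2‖ + δ) * Real.exp (-K)) :=
  lt_of_lt_of_le (by positivity) (le_max_right _ _)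

lemma rat_le {K δ : ℝ} (hδ : 0 < δ) (q : ℂ × ℂ) : rat K δ q ≤ Real.exp K := by
  rw [rat, div_le_iff₀ (rat_den_pos hδ q)]
  calc ‖q.1 - q.2‖ + δ = Real.exp K * ((‖q.1 - q.2‖ + δ) * Real.exp (-K)) := by
        rw [mul_left_comm, ← Real.exp_add]; simp
    _ ≤ _ := mul_le_mul_of_nonneg_left (le_max_right _ _) (Real.exp_pos _).le

lemma Gk_cont {M K δ : ℝ} (hδ : 0 < δ) : Continuous (Gk M K δ) := by
  have h1 : Continuous (rat K δ) := by
    unfold rat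
    refine Continuous.div (by fun_prop) (by fun_prop) fun q => (rat_den_pos hδ q).ne'
  unfold Gk exK
  exact Continuous.log (continuous_const.max h1) fun q => (exK_pos M K δ q).ne'

lemma Gk_ge (M K δ : ℝ) (q : ℂ × ℂ) : -M ≤ Gk M K δ q := by
  rw [Gk, Real.le_log_iff_exp_le (exK_pos _ _ _ _)]
  exact le_max_left _ _

lemma Gk_le {M K δ : ℝ} (hδ : 0 < δ) (hM : 0 ≤ M) (hK : 0 ≤ K) (q : ℂ × ℂ) : Gk M K δ q ≤ K := by
  rw [Gk, Real.log_le_iff_le_exp (exK_pos _ _ _ _)]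
  exact max_le (Real.exp_le_exp.2 (by linarith)) (rat_le hδ q)

def Gb {M K δ : ℝ} (hδ : 0 < δ) (hM : 0 ≤ M) (hK : 0 ≤ K) : BoundedContinuousFunction (ℂ × ℂ) ℝ :=
  BoundedContinuousFunction.ofNormedAddCommGroup (Gk M K δ) (Gk_cont hδ) (M + K) (fun q => by
    rw [Real.norm_eq_abs, abs_le]
    have := Gk_ge M K δ q; have := Gk_le hδ hM hK q
    constructor <;> linarith)

lemma ker_bound {M K δ : ℝ} (hδ : 0 < δ) (y y' : ℂ) (hy : y ≠ 0) (hy' : y' ≠ 0) :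
    ‖y - y'‖ ≤ exK M K δ (1 + y⁻¹, 1 + y'⁻¹) * (max 1 (2 * Real.exp (-K) * ‖y‖) * max 1 (2 * Real.exp (-K) * ‖y'‖)) := by
  have ha : 1 ≤ max 1 (2 * Real.exp (-K) * ‖y‖) := le_max_left _ _
  have ha' : 1 ≤ max 1 (2 * Real.exp (-K) * ‖y'‖) := le_max_left _ _
  have hb := le_max_right 1 (2 * Real.exp (-K) * ‖y‖)
  have hb' := le_max_right 1 (2 * Real.exp (-K) * ‖y'‖)
  set m := max 1 (2 * Real.exp (-K) * ‖y‖)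
  set m' := max 1 (2 * Real.exp (-K) * ‖y'‖)
  have hex : min ‖y - y'‖ (Real.exp K) ≤ exK M K δ (1 + y⁻¹, 1 + y'⁻¹) := by
    refine le_trans ?_ (le_max_right _ _)
    rw [rat, le_div_iff₀ (rat_den_pos hδ _)]
    have e1 : ‖(1 - (1 + y⁻¹))‖ * ‖(1 - (1 + y'⁻¹))‖ = (‖y‖ * ‖y'‖)⁻¹ := by
      simp [mul_comm]
    have e2 : ‖(1 + y⁻¹) - (1 + y'⁻¹)‖ = ‖y - y'‖ * (‖y‖ * ‖y'‖)⁻¹ := by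
      rw [show (1 + y⁻¹) - (1 + y'⁻¹) = -((y - y') * (y * y')⁻¹) by field_simp; ring]
      simp [mul_comm]
    simp only [e1]
    rcases max_cases ((‖y‖ * ‖y'‖)⁻¹) ((‖(1 + y⁻¹) - (1 + y'⁻¹)‖ + δ) * Real.exp (-K)) with ⟨h, _⟩ | ⟨h, _⟩
    · rw [h]
      calc _ ≤ ‖y - y'‖ * (‖y‖ * ‖y'‖)⁻¹ := mul_le_mul_of_nonneg_right (min_le_left _ _) (by positivity)
        _ ≤ _ := by rw [e2]; linarith
    · rw [h]
      calc _ ≤ Real.exp K * ((‖(1 + y⁻¹) - (1 + y'⁻¹)‖ + δ) * Real.exp (-K)) :=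
            mul_le_mul_of_nonneg_right (min_le_right _ _) (by positivity)
        _ = _ := by rw [mul_left_comm, ← Real.exp_add]; simp
  have hmm : 1 ≤ m * m' := by nlinarith
  rcases min_cases ‖y - y'‖ (Real.exp K) with ⟨h, _⟩ | ⟨h, _⟩
  · rw [h] at hex
    have := norm_nonneg (y - y')
    nlinarith
  · rw [h] at hex
    have h1 : ‖y - y'‖ ≤ Real.exp K * (m * m') := by
      have hE : Real.exp K * Real.exp (-K) = 1 := by rw [← Real.exp_add]; simp
      have hyK : ∀ t : ℝ, Real.exp K * (2 * Real.exp (-K) * t) = 2 * t := by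
        intro t; linear_combination (2 * t) * hE
      have hEp := Real.exp_pos K
      have h2 : 2 * ‖y‖ ≤ Real.exp K * (m * m') := by
        rw [← hyK]; refine mul_le_mul_of_nonneg_left ?_ hEp.le; nlinarith
      have h3 : 2 * ‖y'‖ ≤ Real.exp K * (m * m') := by
        rw [← hyK]; refine mul_le_mul_of_nonneg_left ?_ hEp.le; nlinarith
      have := norm_sub_le y y'
      linarith
    exact h1.trans (mul_le_mul_of_nonneg_right hex (by linarith))

lemma van_bound {n : ℕ} {M K δ : ℝ} (hδ : 0 < δ) (y : Fin n → ℂ) (hy : ∀ j, y j ≠ 0)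
    (hm : ∏ j, max 1 (2 * Real.exp (-K) * ‖y j‖) ≤ (1 + 2 * Real.exp (-K)) ^ n) :
    Van y ≤ Real.exp ((n * M + ∑ i, ∑ j, Gk M K δ (1 + (y i)⁻¹, 1 + (y j)⁻¹) + 4 * Real.exp (-K) * n ^ 2) / 2) := by
  set m : Fin n → ℝ := fun j => max 1 (2 * Real.exp (-K) * ‖y j‖) with hmdef
  set ex : Fin n → Fin n → ℝ := fun i j => exK M K δ (1 + (y i)⁻¹, 1 + (y j)⁻¹) with hex
  have hm1 : ∀ j, 1 ≤ m j := fun j => le_max_left _ _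
  have hm0 : ∀ j, 0 < m j := fun j => lt_of_lt_of_le one_pos (hm1 j)
  have hex0 : ∀ i j, 0 < ex i j := fun i j => exK_pos _ _ _ _
  have hV0 : 0 ≤ Van y := by unfold Van; positivity
  have hsq : Van y * Van y ≤ Real.exp (n * M) * ((∏ i, ∏ j, ex i j) * ((∏ i, m i) ^ n * (∏ i, m i) ^ n)) := by
    have h1 : Van y * Van y = ∏ i : Fin n, ∏ j ∈ {i}ᶜ, ‖y j - y i‖ := by
      rw [← Finset.prod_prod_Ioi_mul_eq_prod_prod_off_diag (fun j i : Fin n => ‖y j - y i‖)]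
      simp only [Van, ← Finset.prod_mul_distrib]
      refine Finset.prod_congr rfl fun i _ => Finset.prod_congr rfl fun j _ => ?_
      rw [norm_sub_rev (y i) (y j)]
    rw [h1]
    have h2 : ∏ i : Fin n, ∏ j ∈ {i}ᶜ, ‖y j - y i‖ ≤ ∏ i : Fin n, (Real.exp M * ∏ j, (ex i j * (m i * m j))) := by
      refine Finset.prod_le_prod (fun i _ => by positivity) fun i _ => ?_
      rw [← Finset.prod_compl_mul_prod {i}, Finset.prod_singleton]
      have h3 : ∏ j ∈ {i}ᶜ, ‖y j - y i‖ ≤ ∏ j ∈ {i}ᶜ, (ex i j * (m i * m j)) := by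
        refine Finset.prod_le_prod (fun i _ => by positivity) fun j _ => ?_
        rw [norm_sub_rev]
        exact ker_bound hδ _ _ (hy i) (hy j)
      have h4 : 1 ≤ Real.exp M * (ex i i * (m i * m i)) := by
        have : Real.exp (-M) ≤ ex i i := le_max_left _ _
        have hE : Real.exp M * Real.exp (-M) = 1 := by rw [← Real.exp_add]; simp
        have h5 : 1 ≤ Real.exp M * ex i i := by
          rw [← hE]; exact mul_le_mul_of_nonneg_left this (Real.exp_pos _).le
        have h6 : 1 ≤ m i * m i := by nlinarith [hm1 i]
        rw [← mul_assoc]; nlinarith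
      have h7 : 0 ≤ ∏ j ∈ {i}ᶜ, (ex i j * (m i * m j)) :=
        Finset.prod_nonneg fun j _ => (mul_pos (hex0 i j) (mul_pos (hm0 i) (hm0 j))).le
      calc _ ≤ _ := h3
        _ ≤ (∏ j ∈ {i}ᶜ, (ex i j * (m i * m j))) * (Real.exp M * (ex i i * (m i * m i))) := le_mul_of_one_le_right h7 h4
        _ = _ := by ring
    refine h2.trans (le_of_eq ?_)
    simp only [Finset.prod_mul_distrib, Finset.prod_const, Finset.card_univ, Fintype.card_fin, Finset.prod_pow]
    rw [← Real.exp_nat_mul]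
  have hexp : (∏ i, ∏ j, ex i j) = Real.exp (∑ i, ∑ j, Gk M K δ (1 + (y i)⁻¹, 1 + (y j)⁻¹)) := by
    rw [Real.exp_sum]
    refine Finset.prod_congr rfl fun i _ => ?_
    rw [Real.exp_sum]
    refine Finset.prod_congr rfl fun j _ => ?_
    rw [Gk, Real.exp_log (exK_pos _ _ _ _)]
  have hmm : (∏ i, m i) ^ n ≤ Real.exp (2 * Real.exp (-K) * n ^ 2) := by
    have h1 : (1 + 2 * Real.exp (-K)) ^ n ≤ Real.exp (2 * Real.exp (-K) * n) := by
      rw [mul_comm _ (n : ℝ), Real.exp_nat_mul]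
      refine pow_le_pow_left₀ (by positivity) ?_ _
      linarith [Real.add_one_le_exp (2 * Real.exp (-K))]
    calc _ ≤ (Real.exp (2 * Real.exp (-K) * n)) ^ n :=
          pow_le_pow_left₀ (Finset.prod_nonneg fun j _ => (hm0 j).le) (hm.trans h1) _
      _ = _ := by rw [← Real.exp_nat_mul]; congr 1; ring
  have hmp : 0 ≤ (∏ i, m i) ^ n := pow_nonneg (Finset.prod_nonneg fun j _ => (hm0 j).le) _
  refine (mul_self_le_mul_self_iff hV0 (Real.exp_pos _).le).2 (hsq.trans ?_)
  rw [hexp]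
  calc _ ≤ Real.exp (n * M) * (Real.exp (∑ i, ∑ j, Gk M K δ (1 + (y i)⁻¹, 1 + (y j)⁻¹)) *
        (Real.exp (2 * Real.exp (-K) * n ^ 2) * Real.exp (2 * Real.exp (-K) * n ^ 2))) := by
        gcongr
    _ = _ := by
      simp only [← Real.exp_add]
      congr 1
      ring

lemma int_zeroMeasure (p : ℂ[X]) (n : ℕ) (hn : p.natDegree = n) (z : Fin n → ℂ)
    (hz : p.roots = Finset.univ.val.map z) (φ : ℂ → ℝ) :
    ∫ x, φ x ∂(zeroMeasure p) = (n : ℝ)⁻¹ * ∑ j, φ (z j) := by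
  have h1 : (p.roots.map Measure.dirac).sum = ∑ j, Measure.dirac (z j) := by
    rw [hz, Multiset.map_map]; rfl
  rw [zeroMeasure, h1, hn, integral_smul_measure, integral_finsetSum_measure]
  · simp
  · intro j _
    exact integrable_dirac (by simp [enorm_lt_top])

lemma int_prod_zeroMeasure (p : ℂ[X]) (n : ℕ) (hn : p.natDegree = n) (z : Fin n → ℂ)
    (hz : p.roots = Finset.univ.val.map z) (L : ProbabilityMeasure ℂ) (hL : (L : Measure ℂ) = zeroMeasure p)
    (φ : BoundedContinuousFunction (ℂ × ℂ) ℝ) :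
    ∫ x, φ x ∂((L.prod L : ProbabilityMeasure (ℂ × ℂ)) : Measure (ℂ × ℂ)) = ((n : ℝ) ^ 2)⁻¹ * ∑ i, ∑ j, φ (z i, z j) := by
  rw [ProbabilityMeasure.toMeasure_prod, integral_prod _ (φ.integrable _)]
  simp only [hL, int_zeroMeasure p n hn z hz]
  rw [← Finset.mul_sum]
  ring

end Ker

noncomputable section Prob

lemma detBound (n : ℕ) (hn1 : 1 ≤ n) (p : ℂ[X]) (hp : polPos p) (hn : p.natDegree = n) {M K δ : ℝ}
    (hδ : 0 < δ) (hM : 0 ≤ M) (hK : 0 ≤ K) (T : ℝ) (hT : ∀ i ≤ n, (p.coeff i).re ≤ T)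
    (L : ProbabilityMeasure ℂ) (hL : (L : Measure ℂ) = zeroMeasure p) (I : ℝ)
    (hI : ∫ x, Gb hδ hM hK x ∂((L.prod L : ProbabilityMeasure (ℂ × ℂ)) : Measure (ℂ × ℂ)) ≤ I) :
    ∃ π : Pat n, validPat π ∧ (fun i : Fin (n+1) => (p.coeff i).re) ∈
      Phi π '' Dset π ((n+1) * T) (3 * n)
        (Real.exp ((n * M + n ^ 2 * I + 4 * Real.exp (-K) * n ^ 2) / 2)) := by
  subst hn
  obtain ⟨π, hπ, v, hv0, hvl, hy0, hroots, hpQ, hvpos⟩ := enum_roots p hp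
  refine ⟨π, hπ, v, ?_, ?_⟩
  · have hnpos : (0:ℝ) < p.natDegree := by exact_mod_cast hn1
    have hmah := mahler_bound p hp _ rfl (v 0) hvpos (yv π v) hpQ
    have hyB : ∀ j, ‖yv π v j‖ ≤ 3 * p.natDegree := by
      intro j
      have h1 := hmah (p.natDegree : ℝ)⁻¹ (by positivity)
      have h2 : (p.natDegree : ℝ)⁻¹ * ‖yv π v j‖ ≤ ∏ j, max 1 ((p.natDegree : ℝ)⁻¹ * ‖yv π v j‖) := by
        refine (le_max_right 1 _).trans ?_
        rw [← Finset.mul_prod_erase _ _ (Finset.mem_univ j)]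
        refine le_mul_of_one_le_right (le_trans zero_le_one (le_max_left _ _)) ?_
        exact Finset.one_le_prod (fun i _ => le_max_left _ _)
      have h3 : (1 + (p.natDegree : ℝ)⁻¹) ^ p.natDegree ≤ 3 := by
        calc _ ≤ (Real.exp ((p.natDegree : ℝ)⁻¹)) ^ p.natDegree := by
              refine pow_le_pow_left₀ (by positivity) ?_ _
              linarith [Real.add_one_le_exp ((p.natDegree : ℝ)⁻¹)]
          _ = Real.exp 1 := by rw [← Real.exp_nat_mul, mul_inv_cancel₀ hnpos.ne']
          _ ≤ 3 := by linarith [Real.exp_one_lt_d9]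
      have h4 := (h2.trans h1).trans h3
      rw [inv_mul_le_iff₀ hnpos] at h4
      linarith
    refine ⟨⟨?_, ?_⟩, hy0, ?_⟩
    · intro i
      refine Fin.cases ?_ (fun l => ?_) i
      · simpa using hvpos.le
      · obtain ⟨j, hj⟩ := hvl l
        simp only [Fin.cons_succ]
        exact (abs_le.1 (hj.trans (hyB j))).1
    · intro i
      refine Fin.cases ?_ (fun l => ?_) i
      · simp only [Fin.cons_zero]
        rw [hv0, Polynomial.eval_eq_sum_range, Complex.re_sum]
        calc _ ≤ ∑ i ∈ Finset.range (p.natDegree + 1), T := by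
              refine Finset.sum_le_sum fun i hi => ?_
              simpa using hT i (by simpa [Nat.lt_succ_iff] using hi)
          _ = _ := by simp
      · obtain ⟨j, hj⟩ := hvl l
        simp only [Fin.cons_succ]
        exact (abs_le.1 (hj.trans (hyB j))).2
    · refine (van_bound (M := M) (K := K) hδ (yv π v) hy0 (hmah _ (by positivity))).trans ?_
      rw [int_prod_zeroMeasure p _ rfl _ hroots L hL, inv_mul_le_iff₀ (by positivity)] at hI
      refine Real.exp_le_exp.2 ?_
      have : ∑ i, ∑ j, Gk M K δ (1 + (yv π v i)⁻¹, 1 + (yv π v j)⁻¹) ≤ p.natDegree ^ 2 * I := hI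
      linarith
  · funext i
    simp only [Phi]
    rw [← hpQ]

lemma pi_mono' {m : ℕ} (μ ν : Fin m → Measure ℝ) [∀ i, SigmaFinite (μ i)] [∀ i, SigmaFinite (ν i)]
    (h : ∀ i, μ i ≤ ν i) : Measure.pi μ ≤ Measure.pi ν := by
  refine Measure.le_iff.2 fun s hs => ?_
  rw [Measure.pi_def, Measure.pi_def, toMeasure_apply _ _ hs, toMeasure_apply _ _ hs]
  have : OuterMeasure.pi (fun i => (μ i).toOuterMeasure) ≤ OuterMeasure.pi (fun i => (ν i).toOuterMeasure) := by
    rw [OuterMeasure.le_pi]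
    intro s _
    refine (OuterMeasure.pi_pi_le _ _).trans ?_
    exact Finset.prod_le_prod' fun i _ => h i (s i)
  exact this s

lemma exp_le_vol : expMeasure 1 ≤ volume := by
  have : expMeasure 1 = volume.withDensity (exponentialPDF 1) := rfl
  rw [this]
  conv_rhs => rw [← withDensity_one (μ := volume)]
  refine withDensity_mono (ae_of_all _ fun x => ?_)
  rw [exponentialPDF_eq]
  simp only [Pi.one_apply, ENNReal.ofReal_le_one]
  split_ifs with h
  · simpa using h
  · exact zero_le_one

instance : IsProbabilityMeasure (expMeasure 1) := isProbabilityMeasure_expMeasure one_pos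

lemma exp_Iic (x : ℝ) : (expMeasure 1).real (Set.Iic x) = if 0 ≤ x then 1 - Real.exp (-x) else 0 := by
  rw [← cdf_eq_real, cdf_expMeasure_eq one_pos]; simp

lemma exp_Ioi (x : ℝ) (hx : 0 ≤ x) : expMeasure 1 (Set.Ioi x) = ENNReal.ofReal (Real.exp (-x)) := by
  rw [← Set.compl_Iic, ← ofReal_measureReal, probReal_compl_eq_one_sub measurableSet_Iic, exp_Iic, if_pos hx]
  congr 1; ring

lemma exp_Iic0 : expMeasure 1 (Set.Iic 0) = 0 := by
  rw [← ofReal_measureReal, exp_Iic]; simp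

variable {Ω : Type*} [MeasurableSpace Ω]

lemma randPoly_coeff (ξ : ℕ → Ω → ℝ) (n : ℕ) (ω : Ω) (i : ℕ) :
    (randPoly ξ n ω).coeff i = if i ≤ n then (ξ i ω : ℂ) else 0 := by
  simp [randPoly, Polynomial.coeff_X_pow]

lemma randPoly_deg (ξ : ℕ → Ω → ℝ) (n : ℕ) (ω : Ω) (h : 0 < ξ n ω) : (randPoly ξ n ω).natDegree = n := by
  refine Polynomial.natDegree_eq_of_le_of_coeff_ne_zero ?_ ?_
  · rw [Polynomial.natDegree_le_iff_coeff_eq_zero]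
    intro N hN
    rw [randPoly_coeff, if_neg (by omega)]
  · rw [randPoly_coeff, if_pos le_rfl]
    exact_mod_cast h.ne'

lemma randPoly_pos (ξ : ℕ → Ω → ℝ) (n : ℕ) (hn : 1 ≤ n) (ω : Ω) (h : ∀ j, 0 < ξ j ω) : polPos (randPoly ξ n ω) := by
  have hd := randPoly_deg ξ n ω (h n)
  refine ⟨by omega, fun i hi => ?_⟩
  rw [randPoly_coeff, if_pos (by omega)]
  simp [h i]

lemma prob_bound (P : Measure Ω) [IsProbabilityMeasure P]
    (ξ : ℕ → Ω → ℝ) (hmeas : ∀ j, Measurable (ξ j))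
    (hindep : iIndepFun ξ P)
    (hdist : ∀ j, Measure.map (ξ j) P = ProbabilityTheory.expMeasure 1)
    (Ln : ℕ → Ω → ProbabilityMeasure ℂ)
    (hLn : ∀ n, 1 ≤ n → ∀ ω, (∀ j, 0 < ξ j ω) →
      (Ln n ω : Measure ℂ) = zeroMeasure (randPoly ξ n ω)) (n : ℕ) (hn : 1 ≤ n) {M K δ : ℝ}
    (hδ : 0 < δ) (hM : 0 ≤ M) (hK : 0 ≤ K) (T : ℝ) (hT : 0 ≤ T) (I : ℝ) :
    P {ω | ∫ x, Gb hδ hM hK x ∂(((Ln n ω).prod (Ln n ω) : ProbabilityMeasure (ℂ × ℂ)) : Measure (ℂ × ℂ)) ≤ I}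
      ≤ ENNReal.ofReal ((n+1) * Real.exp (-T) + (n^n * n^n * 3^n) *
        ((((n+1) * T) ^ n * (Real.exp ((n * M + n ^ 2 * I + 4 * Real.exp (-K) * n ^ 2) / 2)) *
          ((n+1).factorial * 2^(n+1)) * (((n+1) * T) * (2*(3*n))^n)))) := by
  set E := Real.exp ((n * M + n ^ 2 * I + 4 * Real.exp (-K) * n ^ 2) / 2) with hE
  set x : Ω → Fin (n+1) → ℝ := fun ω i => ξ i ω with hx
  have hxm : Measurable x := measurable_pi_lambda _ fun i => hmeas i
  have hlaw : Measure.map x P ≤ volume := by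
    have h1 : iIndepFun (fun (i : Fin (n+1)) => ξ i) P := hindep.precomp Fin.val_injective
    have h2 := (iIndepFun_iff_map_fun_eq_pi_map (fun i : Fin (n+1) => (hmeas i).aemeasurable)).1 h1
    have h3 : Measure.map x P = Measure.pi fun i : Fin (n+1) => expMeasure 1 := by
      rw [hx, h2]; simp only [hdist]
    rw [h3, volume_pi]
    exact pi_mono' _ _ fun i => exp_le_vol
  set S1 : Set Ω := ⋃ j : ℕ, ξ j ⁻¹' Set.Iic 0
  set S2 : Set Ω := ⋃ j ∈ Finset.range (n+1), ξ j ⁻¹' Set.Ioi T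
  set F := Finset.univ.filter (fun π : Pat n => validPat π)
  set S3 : Set Ω := ⋃ π ∈ F, x ⁻¹' (Phi π '' Dset π ((n+1) * T) (3 * n) E)
  have hsub : {ω | ∫ x, Gb hδ hM hK x ∂(((Ln n ω).prod (Ln n ω) : ProbabilityMeasure (ℂ × ℂ)) : Measure (ℂ × ℂ)) ≤ I}
      ⊆ S1 ∪ (S2 ∪ S3) := by
    intro ω hω
    by_cases h1 : ω ∈ S1
    · exact Or.inl h1
    by_cases h2 : ω ∈ S2
    · exact Or.inr (Or.inl h2)
    refine Or.inr (Or.inr ?_)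
    have h1' : ∀ j, 0 < ξ j ω := by simpa [S1] using h1
    have h2' : ∀ j ≤ n, ξ j ω ≤ T := by simpa [S2, Nat.lt_succ_iff] using h2
    have hd := randPoly_deg ξ n ω (h1' n)
    obtain ⟨π, hπ, hmem⟩ := detBound n hn (randPoly ξ n ω) (randPoly_pos ξ n hn ω h1') hd hδ hM hK T
      (fun i hi => by rw [randPoly_coeff, if_pos hi]; simpa using h2' i hi) (Ln n ω) (hLn n hn ω h1') I hω
    have hxx : (fun i : Fin (n+1) => ((randPoly ξ n ω).coeff i).re) = x ω := by
      funext i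
      rw [randPoly_coeff, if_pos (by omega)]; simp [x]
    rw [hxx] at hmem
    exact Set.mem_iUnion₂.2 ⟨π, by simpa [F] using hπ, hmem⟩
  have hS1 : P S1 = 0 := by
    refine measure_iUnion_null fun j => ?_
    rw [← Measure.map_apply (hmeas j) measurableSet_Iic, hdist, exp_Iic0]
  have hS2 : P S2 ≤ ENNReal.ofReal ((n+1) * Real.exp (-T)) := by
    refine (measure_biUnion_finset_le _ _).trans ?_
    have : ∀ j, P (ξ j ⁻¹' Set.Ioi T) = ENNReal.ofReal (Real.exp (-T)) := fun j => by
      rw [← Measure.map_apply (hmeas j) measurableSet_Ioi, hdist, exp_Ioi _ hT]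
    simp only [this, Finset.sum_const, Finset.card_range, nsmul_eq_mul]
    rw [ENNReal.ofReal_mul (by positivity)]
    gcongr
    rw [← Nat.cast_add_one, ENNReal.ofReal_natCast]
  set V := (((n+1) * T) ^ n * E * ((n+1).factorial * 2^(n+1)) * (((n+1) * T) * (2*(3*n))^n)) with hV
  have hV0 : 0 ≤ V := by positivity
  have hS3 : P S3 ≤ ENNReal.ofReal ((n^n * n^n * 3^n) * V) := by
    refine (measure_biUnion_finset_le _ _).trans ?_
    have : ∀ π ∈ F, P (x ⁻¹' (Phi π '' Dset π ((n+1) * T) (3 * n) E)) ≤ ENNReal.ofReal V := fun π hπ => by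
      refine (Measure.le_map_apply hxm.aemeasurable _).trans ((hlaw _).trans ?_)
      exact vol_image π (by simpa [F] using hπ) _ _ _ (by positivity) (by positivity) (Real.exp_pos _).le
    refine (Finset.sum_le_sum this).trans ?_
    rw [Finset.sum_const, nsmul_eq_mul, ENNReal.ofReal_mul (p := (n:ℝ)^n * n^n * 3^n) (q := V) (by positivity)]
    refine mul_le_mul_left (α := ℝ≥0∞) ?_ _
    have hc : F.card ≤ n^n * n^n * 3^n := by
      refine (Finset.card_le_univ _).trans (le_of_eq ?_)
      have : Fintype.card SignType = 3 := rfl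
      simp [Fintype.card_prod, this, mul_assoc]
    have hc' : ((n:ℝ)^n * n^n * 3^n) = ((n^n * n^n * 3^n : ℕ) : ℝ) := by push_cast; ring
    rw [hc', ENNReal.ofReal_natCast]
    exact_mod_cast hc
  calc _ ≤ P (S1 ∪ (S2 ∪ S3)) := measure_mono hsub
    _ ≤ P S1 + (P S2 + P S3) := (measure_union_le _ _).trans (by gcongr; exact measure_union_le _ _)
    _ ≤ 0 + (ENNReal.ofReal ((n+1) * Real.exp (-T)) + ENNReal.ofReal ((n^n * n^n * 3^n) * V)) := by
      rw [hS1]; gcongr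
    _ = _ := by rw [zero_add, ← ENNReal.ofReal_add (by positivity) (by positivity)]

end Prob

section Asym

lemma asym_aux (M c η : ℝ) (hη : 0 < η) : ∀ᶠ n : ℕ in atTop,
    ((n:ℝ)+1) * Real.exp (-(n:ℝ)^3) + ((n:ℝ)^n * n^n * 3^n) *
        (((((n:ℝ)+1) * n^3) ^ n * (Real.exp (n * M / 2 + n ^ 2 * c)) *
          ((n+1).factorial * 2^(n+1)) * ((((n:ℝ)+1) * n^3) * (2*(3*n))^n)))
      ≤ Real.exp (n ^ 2 * (c + η)) := by
  have hlog : ∀ᶠ n : ℕ in atTop, Real.log ((n:ℝ) + 6) ≤ (η / 1000) * ((n:ℝ) + 6) := by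
    have h1 := (Real.isLittleO_log_id_atTop).bound (show 0 < η / 1000 by positivity)
    have h2 : Tendsto (fun n : ℕ => (n:ℝ) + 6) atTop atTop :=
      tendsto_atTop_add_const_right _ _ tendsto_natCast_atTop_atTop
    filter_upwards [h2.eventually h1] with n hn
    simp only [id, Real.norm_eq_abs] at hn
    rw [abs_of_nonneg (show (0:ℝ) ≤ (n:ℝ) + 6 by positivity)] at hn
    exact (le_abs_self _).trans hn
  have hbig : ∀ A : ℝ, ∀ᶠ n : ℕ in atTop, A ≤ (n:ℝ) := fun A =>
    tendsto_natCast_atTop_atTop.eventually (eventually_ge_atTop A)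
  filter_upwards [hlog, hbig 1, hbig (4 * M / η), hbig (|c| + η + 4), hbig (4 / η)] with n hl h1 hM hc h2
  set x : ℝ := (n:ℝ) with hx
  have hx2 : x ≤ x ^ 2 := by nlinarith
  have hηx : 4 ≤ η * x := by rw [div_le_iff₀ hη] at h2; linarith
  have hMx : 4 * M ≤ η * x := by rw [div_le_iff₀ hη] at hM; linarith
  have hA : (x + 1) * Real.exp (-x ^ 3) ≤ Real.exp (x ^ 2 * (c + η / 2)) := by
    calc _ ≤ Real.exp x * Real.exp (-x ^ 3) := by gcongr; exact Real.add_one_le_exp x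
      _ = Real.exp (x - x ^ 3) := by rw [← Real.exp_add]; rfl
      _ ≤ _ := by
        refine Real.exp_le_exp.2 ?_
        have := neg_abs_le c
        have h3 : 4 ≤ c + η + x := by linarith
        have : x ^ 2 * 1 ≤ x ^ 2 * (c + η / 2 + x) := by
          refine mul_le_mul_of_nonneg_left ?_ (by positivity)
          have := abs_nonneg c
          linarith
        nlinarith
  have hB : (x^n * x^n * 3^n) *
        ((((x+1) * x^3) ^ n * (Real.exp (x * M / 2 + x ^ 2 * c)) *
          ((n+1).factorial * 2^(n+1)) * (((x+1) * x^3) * (2*(3*x))^n))) ≤ Real.exp (x ^ 2 * (c + η / 2)) := by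
    set N := x + 6 with hN
    have hNpos : 0 < N := by linarith
    have hxN : x ≤ N := by linarith
    have hf : ((n+1).factorial : ℝ) ≤ N ^ (n+1) := by
      calc ((n+1).factorial : ℝ) ≤ ((n+1 : ℕ) : ℝ) ^ (n+1) := by exact_mod_cast Nat.factorial_le_pow (n+1)
        _ ≤ _ := by
          refine pow_le_pow_left₀ (by positivity) ?_ _
          push_cast; linarith
    have hS : (x + 1) * x ^ 3 ≤ N ^ 4 := by
      calc (x+1) * x^3 ≤ N * N ^ 3 := by gcongr; linarith
        _ = N ^ 4 := by ring
    have h6 : 2 * (3 * x) ≤ N ^ 2 := by nlinarith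
    have hN1 : 1 ≤ N := by linarith
    calc _ ≤ (N ^ n * N ^ n * N ^ n) * (((N ^ 4) ^ n * (Real.exp (x * M / 2 + x ^ 2 * c)) *
          (N ^ (n+1) * N ^(n+1)) * ((N ^ 4) * (N ^ 2)^n))) := by
            gcongr <;> linarith
      _ = N ^ (11 * n + 6) * Real.exp (x * M / 2 + x ^ 2 * c) := by ring_nf
      _ ≤ N ^ (11 * (n + 1)) * Real.exp (x * M / 2 + x ^ 2 * c) := by
          refine mul_le_mul_of_nonneg_right (pow_le_pow_right₀ hN1 (by omega)) (Real.exp_pos _).le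
      _ = Real.exp (11 * (x + 1) * Real.log N + (x * M / 2 + x ^ 2 * c)) := by
          rw [Real.exp_add (11 * (x + 1) * Real.log N), ← Real.rpow_natCast, Real.rpow_def_of_pos hNpos]
          congr 2; push_cast; rw [← hx]; ring
      _ ≤ _ := by
          refine Real.exp_le_exp.2 ?_
          have : 11 * (x + 1) * Real.log N ≤ 11 * (x + 1) * (η / 1000 * N) :=
            mul_le_mul_of_nonneg_left hl (by positivity)
          have h3 : 11 * (x + 1) * (η / 1000 * N) ≤ 11 * (2 * x) * (η / 1000 * (7 * x)) := by
            gcongr <;> linarith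
          have h4 : x * (4 * M) ≤ x * (η * x) := mul_le_mul_of_nonneg_left hMx (by positivity)
          have h5 : 0 ≤ η * x ^ 2 := by positivity
          nlinarith
  have h2' : (2:ℝ) ≤ Real.exp (x ^ 2 * (η / 2)) := by
    have := Real.add_one_le_exp (x ^ 2 * (η / 2))
    nlinarith
  calc _ ≤ Real.exp (x ^ 2 * (c + η / 2)) + Real.exp (x ^ 2 * (c + η / 2)) := add_le_add hA hB
    _ = 2 * Real.exp (x ^ 2 * (c + η / 2)) := by ring
    _ ≤ Real.exp (x ^ 2 * (η / 2)) * Real.exp (x ^ 2 * (c + η / 2)) := by gcongr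
    _ = _ := by rw [← Real.exp_add]; congr 1; ring

lemma limsup_bound (u : ℕ → ℝ≥0∞) (c : ℝ) (h : ∀ᶠ n : ℕ in atTop, u n ≤ ENNReal.ofReal (Real.exp (n ^ 2 * c))) :
    atTop.limsup (fun n : ℕ => ((((n : ℝ) ^ 2)⁻¹ : ℝ) : EReal) * ENNReal.log (u n)) ≤ (c : EReal) := by
  refine Filter.limsup_le_of_le (by isBoundedDefault) ?_
  filter_upwards [h, eventually_ge_atTop 1] with n hn h1
  have hpos : (0:ℝ) < (n:ℝ)^2 := by positivity
  have h3 : ENNReal.log (u n) ≤ ((n ^ 2 * c : ℝ) : EReal) := by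
    refine (ENNReal.log_monotone hn).trans (le_of_eq ?_)
    rw [ENNReal.log_ofReal_of_pos (Real.exp_pos _), Real.log_exp]
  calc _ ≤ ((((n : ℝ) ^ 2)⁻¹ : ℝ) : EReal) * ((n ^ 2 * c : ℝ) : EReal) := by
        refine mul_le_mul_of_nonneg_left h3 ?_
        exact_mod_cast (inv_pos.2 hpos).le
    _ = _ := by
      rw [← EReal.coe_mul, inv_mul_cancel_left₀ hpos.ne']

end Asym

section Steps

variable {Ω : Type*} [MeasurableSpace Ω]

lemma exists_eps (φ : BoundedContinuousFunction (ℂ × ℂ) ℝ) (μ : ProbabilityMeasure ℂ) (I : ℝ)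
    (hI : ∫ x, φ x ∂((μ.prod μ : ProbabilityMeasure (ℂ × ℂ)) : Measure (ℂ × ℂ)) < I) :
    ∃ ε > 0, ∀ L : ProbabilityMeasure ℂ, levyProkhorovDist (L : Measure ℂ) (μ : Measure ℂ) ≤ ε →
      ∫ x, φ x ∂((L.prod L : ProbabilityMeasure (ℂ × ℂ)) : Measure (ℂ × ℂ)) ≤ I := by
  have hc : Continuous (fun L : ProbabilityMeasure ℂ =>
      ∫ x, φ x ∂((L.prod L : ProbabilityMeasure (ℂ × ℂ)) : Measure (ℂ × ℂ))) :=
    (ProbabilityMeasure.continuous_integral_boundedContinuousFunction φ).comp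
      (ProbabilityMeasure.continuous_prod.comp (continuous_id.prodMk continuous_id))
  have hc2 := hc.comp (LevyProkhorov.continuous_toMeasure_probabilityMeasure (Ω := ℂ))
  have ho := hc2.isOpen_preimage _ (isOpen_Iio (a := I))
  obtain ⟨ε, hε, hb⟩ := Metric.isOpen_iff.1 ho (LevyProkhorov.ofMeasure μ) hI
  refine ⟨ε / 2, by positivity, fun L hL => ?_⟩
  have : LevyProkhorov.ofMeasure L ∈ Metric.ball (LevyProkhorov.ofMeasure μ) ε := by
    rw [Metric.mem_ball, LevyProkhorov.dist_probabilityMeasure_def]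
    exact lt_of_le_of_lt hL (by linarith)
  exact le_of_lt (hb this)

lemma upper_step (P : Measure Ω) [IsProbabilityMeasure P]
    (ξ : ℕ → Ω → ℝ) (hmeas : ∀ j, Measurable (ξ j))
    (hindep : iIndepFun ξ P)
    (hdist : ∀ j, Measure.map (ξ j) P = ProbabilityTheory.expMeasure 1)
    (Ln : ℕ → Ω → ProbabilityMeasure ℂ)
    (hLn : ∀ n, 1 ≤ n → ∀ ω, (∀ j, 0 < ξ j ω) →
      (Ln n ω : Measure ℂ) = zeroMeasure (randPoly ξ n ω)) (μ : ProbabilityMeasure ℂ) {M K δ : ℝ}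
    (hδ : 0 < δ) (hM : 0 ≤ M) (hK : 0 ≤ K) :
      (⨅ (ε : ℝ) (_ : 0 < ε),
          atTop.limsup (fun n : ℕ =>
            ((((n : ℝ) ^ 2)⁻¹ : ℝ) : EReal) *
              ENNReal.log (P {ω |
                levyProkhorovDist (Ln n ω : Measure ℂ) (μ : Measure ℂ) ≤ ε}))) ≤
        (((∫ x, Gk M K δ x ∂((μ : Measure ℂ).prod (μ : Measure ℂ))) / 2 + 2 * Real.exp (-K) : ℝ) : EReal) := by
  rw [← EReal.le_of_forall_lt_iff_le]
  intro z hz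
  rw [EReal.coe_lt_coe_iff] at hz
  set J := ∫ x, Gk M K δ x ∂((μ : Measure ℂ).prod (μ : Measure ℂ)) with hJ
  set η := z - (J / 2 + 2 * Real.exp (-K)) with hη
  have hηp : 0 < η := by linarith
  obtain ⟨ε, hε, h⟩ := exists_eps (Gb hδ hM hK) μ (J + η) (by
    have : ∫ x, Gb hδ hM hK x ∂((μ.prod μ : ProbabilityMeasure (ℂ × ℂ)) : Measure (ℂ × ℂ)) = J := by
      rw [ProbabilityMeasure.toMeasure_prod]; rfl
    linarith)
  refine (iInf₂_le ε hε).trans ?_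
  refine limsup_bound _ z ?_
  filter_upwards [asym_aux M (z - η / 2) (η / 2) (by linarith), eventually_ge_atTop 1] with n hn h1
  have hb := prob_bound P ξ hmeas hindep hdist Ln hLn n h1 hδ hM hK ((n:ℝ)^3) (by positivity) (J + η)
  refine (measure_mono ?_).trans (hb.trans (ENNReal.ofReal_le_ofReal ?_))
  · intro ω hω
    exact h _ hω
  · have e1 : (n * M + (n:ℝ) ^ 2 * (J + η) + 4 * Real.exp (-K) * n ^ 2) / 2 = n * M / 2 + (n:ℝ) ^ 2 * (z - η / 2) := by
      rw [hη]; ring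
    rw [e1]
    refine hn.trans (le_of_eq ?_)
    congr 1; ring

noncomputable def phk (k : ℝ) (z : ℂ) : ℝ := Real.log (max 1 (1 / max ‖1 - z‖ (Real.exp (-k))))

lemma phk_cont (k : ℝ) : Continuous (phk k) := by
  have hd : ∀ z : ℂ, max ‖1 - z‖ (Real.exp (-k)) ≠ 0 := fun z =>
    (lt_of_lt_of_le (Real.exp_pos _) (le_max_right _ _)).ne'
  unfold phk
  refine Continuous.log (continuous_const.max (Continuous.div continuous_const (by fun_prop) hd)) fun z => ?_
  exact (lt_of_lt_of_le one_pos (le_max_left _ _)).ne'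

lemma phk_nonneg (k : ℝ) (z : ℂ) : 0 ≤ phk k z := Real.log_nonneg (le_max_left _ _)

lemma phk_le (k : ℝ) (hk : 0 ≤ k) (z : ℂ) : phk k z ≤ k := by
  unfold phk
  rw [Real.log_le_iff_le_exp (lt_of_lt_of_le one_pos (le_max_left _ _))]
  refine max_le (Real.one_le_exp hk) ?_
  rw [div_le_iff₀ (lt_of_lt_of_le (Real.exp_pos _) (le_max_right _ _))]
  calc (1:ℝ) = Real.exp k * Real.exp (-k) := by rw [← Real.exp_add]; simp
    _ ≤ _ := mul_le_mul_of_nonneg_left (le_max_right _ _) (Real.exp_pos _).le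

lemma phk_one (k : ℝ) (hk : 0 ≤ k) : phk k 1 = k := by
  unfold phk
  rw [sub_self, norm_zero, max_eq_right (Real.exp_pos _).le, one_div, ← Real.exp_neg, neg_neg,
    max_eq_right (Real.one_le_exp hk), Real.log_exp]

noncomputable def phb (k : ℝ) (hk : 0 ≤ k) : BoundedContinuousFunction ℂ ℝ :=
  BoundedContinuousFunction.ofNormedAddCommGroup (phk k) (phk_cont k) k (fun q => by
    rw [Real.norm_eq_abs, abs_of_nonneg (phk_nonneg k q)]; exact phk_le k hk q)

lemma phk_int (k : ℝ) (p : ℂ[X]) (hp : polPos p) : ∫ x, phk k x ∂(zeroMeasure p) ≤ 1 := by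
  obtain ⟨π, hπ, v, hv0, hvl, hy0, hroots, hpQ, hvpos⟩ := enum_roots p hp
  have hm := mahler_bound p hp _ rfl (v 0) hvpos (yv π v) hpQ 1 zero_le_one
  have hn : (0:ℝ) < p.natDegree := by exact_mod_cast hp.1
  rw [int_zeroMeasure p _ rfl _ hroots, inv_mul_le_iff₀ hn]
  have h1 : ∀ j, phk k (1 + (yv π v j)⁻¹) ≤ Real.log (max 1 (1 * ‖yv π v j‖)) := by
    intro j
    unfold phk
    refine Real.log_le_log (lt_of_lt_of_le one_pos (le_max_left _ _)) (max_le_max le_rfl ?_)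
    have hy := norm_pos_iff.2 (hy0 j)
    rw [div_le_iff₀ (lt_of_lt_of_le (Real.exp_pos _) (le_max_right _ _))]
    have : ‖1 - (1 + (yv π v j)⁻¹)‖ = ‖yv π v j‖⁻¹ := by simp
    rw [this, one_mul]
    calc (1:ℝ) = ‖yv π v j‖ * ‖yv π v j‖⁻¹ := (mul_inv_cancel₀ hy.ne').symm
      _ ≤ _ := mul_le_mul_of_nonneg_left (le_max_left _ _) hy.le
  calc _ ≤ ∑ j, Real.log (max 1 (1 * ‖yv π v j‖)) := Finset.sum_le_sum fun j _ => h1 j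
    _ = Real.log (∏ j, max 1 (1 * ‖yv π v j‖)) := by
      rw [Real.log_prod]
      intro j _
      exact (lt_of_lt_of_le one_pos (le_max_left _ _)).ne'
    _ ≤ Real.log ((1 + 1) ^ p.natDegree) :=
      Real.log_le_log (Finset.prod_pos fun j _ => lt_of_lt_of_le one_pos (le_max_left _ _)) hm
    _ = p.natDegree * Real.log (1 + 1) := Real.log_pow _ _
    _ ≤ p.natDegree * 1 := by
      gcongr
      linarith [Real.log_le_sub_one_of_pos (show (0:ℝ) < 1 + 1 by norm_num)]

lemma calP_one (μ : ProbabilityMeasure ℂ) (hμ : μ ∈ calP) : (μ : Measure ℂ) {1} = 0 := by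
  have h1 : ∀ (k : ℝ) (hk : 0 ≤ k), ∫ x, phb k hk x ∂(μ : Measure ℂ) ≤ 1 := by
    intro k hk
    have hcl : IsClosed {μ : ProbabilityMeasure ℂ | ∫ x, phb k hk x ∂(μ : Measure ℂ) ≤ 1} :=
      isClosed_le (ProbabilityMeasure.continuous_integral_boundedContinuousFunction (phb k hk)) continuous_const
    refine closure_minimal ?_ hcl hμ
    rintro ν ⟨p, hp, hν⟩
    change ∫ x, phb k hk x ∂(ν : Measure ℂ) ≤ 1
    rw [hν]
    exact phk_int k p hp
  have h2 : ∀ k : ℝ, 0 ≤ k → k * (μ : Measure ℂ).real {1} ≤ 1 := by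
    intro k hk
    refine le_trans ?_ (h1 k hk)
    have : ∫ x, Set.indicator {(1:ℂ)} (fun _ => k) x ∂(μ : Measure ℂ) = k * (μ : Measure ℂ).real {1} := by
      rw [integral_indicator_const _ (measurableSet_singleton _), smul_eq_mul, mul_comm]
    rw [← this]
    refine integral_mono ((integrable_const k).indicator (measurableSet_singleton _)) ((phb k hk).integrable _) fun x => ?_
    by_cases hx : x = 1
    · subst hx
      simp only [Set.indicator_of_mem (Set.mem_singleton _)]
      exact (phk_one k hk).ge
    · rw [Set.indicator_of_notMem (by simpa using hx)]
      exact phk_nonneg k x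
  rw [← measureReal_eq_zero_iff]
  by_contra hne
  have hpos : 0 < (μ : Measure ℂ).real {1} := lt_of_le_of_ne measureReal_nonneg (Ne.symm hne)
  have := h2 (2 / (μ : Measure ℂ).real {1}) (by positivity)
  rw [div_mul_cancel₀ _ hpos.ne'] at this
  linarith

end Steps

section Lim

lemma Gk_zero_le (M K : ℝ) (hM : 0 ≤ M) (q : ℂ × ℂ) (h1 : q.1 ≠ 1) (h2 : q.2 ≠ 1) :
    Gk M K 0 q ≤ max (-(fker q.1 q.2)) 0 - min (max (fker q.1 q.2) 0) M := by
  have hp1 : 0 < ‖1 - q.1‖ := norm_pos_iff.2 (sub_ne_zero.2 h1.symm)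
  have hp2 : 0 < ‖1 - q.2‖ := norm_pos_iff.2 (sub_ne_zero.2 h2.symm)
  have key : Gk M K 0 q ≤ max (-M) (-(fker q.1 q.2)) ∨ Gk M K 0 q ≤ -M := by
    by_cases h : q.1 = q.2
    · right
      unfold Gk exK rat
      rw [h]
      simp [(Real.exp_pos _).le]
    · left
      have hp3 : 0 < ‖q.1 - q.2‖ := norm_pos_iff.2 (sub_ne_zero.2 h)
      unfold Gk
      rw [Real.log_le_iff_le_exp (exK_pos _ _ _ _)]
      unfold exK
      refine max_le (Real.exp_le_exp.2 (le_max_left _ _)) ?_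
      refine le_trans ?_ (Real.exp_le_exp.2 (le_max_right _ _))
      have e : Real.exp (-(fker q.1 q.2)) = ‖q.1 - q.2‖ / (‖1 - q.1‖ * ‖1 - q.2‖) := by
        unfold fker
        rw [neg_sub, Real.exp_sub, Real.exp_add, Real.exp_log hp1, Real.exp_log hp2, Real.exp_log hp3]
      rw [e, rat, add_zero]
      exact div_le_div_of_nonneg_left hp3.le (mul_pos hp1 hp2) (le_max_left _ _)
  rcases key with h | h
  · refine h.trans ?_
    rcases le_total 0 (fker q.1 q.2) with h0 | h0
    · rw [max_eq_right (by linarith : -(fker q.1 q.2) ≤ 0), max_eq_left h0]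
      refine max_le ?_ ?_
      · linarith [min_le_right (fker q.1 q.2) M]
      · linarith [min_le_left (fker q.1 q.2) M]
    · rw [max_eq_left (by linarith : 0 ≤ -(fker q.1 q.2)), max_eq_right h0, min_eq_left hM]
      refine max_le ?_ ?_ <;> linarith
  · refine h.trans ?_
    linarith [min_le_right (max (fker q.1 q.2) 0) M, le_max_right (-(fker q.1 q.2)) 0]

lemma fker_meas : Measurable (fun q : ℂ × ℂ => fker q.1 q.2) := by
  unfold fker
  have : Measurable Real.log := Real.measurable_log
  fun_prop

lemma ae_ne_one (μ : ProbabilityMeasure ℂ) (h : (μ : Measure ℂ) {1} = 0) :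
    ∀ᵐ q ∂((μ : Measure ℂ).prod (μ : Measure ℂ)), q.1 ≠ 1 ∧ q.2 ≠ 1 := by
  have h1 : ∀ᵐ z ∂(μ : Measure ℂ), z ≠ 1 := by
    rw [ae_iff]; simpa using h
  exact (Measure.quasiMeasurePreserving_fst.ae h1).and (Measure.quasiMeasurePreserving_snd.ae h1)

lemma Gk_tendsto (μ : ProbabilityMeasure ℂ) (h : (μ : Measure ℂ) {1} = 0) (M K : ℝ) (hM : 0 ≤ M) (hK : 0 ≤ K) :
    Tendsto (fun m : ℕ => ∫ x, Gk M K (1 / ((m:ℝ) + 1)) x ∂((μ : Measure ℂ).prod (μ : Measure ℂ))) atTop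
      (nhds (∫ x, Gk M K 0 x ∂((μ : Measure ℂ).prod (μ : Measure ℂ)))) := by
  have hδ : ∀ m : ℕ, 0 < 1 / ((m:ℝ) + 1) := fun m => by positivity
  refine tendsto_integral_of_dominated_convergence (fun _ => M + K)
    (fun m => (Gk_cont (hδ m)).aestronglyMeasurable) (integrable_const _) (fun m => ae_of_all _ fun q => ?_) ?_
  · rw [Real.norm_eq_abs, abs_le]
    have := Gk_ge M K (1 / ((m:ℝ) + 1)) q; have := Gk_le (hδ m) hM hK q
    constructor <;> linarith
  · filter_upwards [ae_ne_one μ h] with q hq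
    have hp1 : 0 < ‖1 - q.1‖ := norm_pos_iff.2 (sub_ne_zero.2 hq.1.symm)
    have hp2 : 0 < ‖1 - q.2‖ := norm_pos_iff.2 (sub_ne_zero.2 hq.2.symm)
    have hc : Continuous (fun δ : ℝ => Gk M K δ q) := by
      unfold Gk exK rat
      refine Continuous.log (continuous_const.max (Continuous.div (by fun_prop) (by fun_prop) fun δ => ?_)) fun δ => ?_
      · exact (lt_of_lt_of_le (mul_pos hp1 hp2) (le_max_left _ _)).ne'
      · exact (lt_of_lt_of_le (Real.exp_pos _) (le_max_left _ _)).ne'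
    exact (hc.tendsto 0).comp tendsto_one_div_add_atTop_nhds_zero_nat

lemma final_lim (μ : ProbabilityMeasure ℂ) (h : (μ : Measure ℂ) {1} = 0) (X : EReal)
    (hX : ∀ M K δ : ℝ, 0 ≤ M → 0 ≤ K → 0 < δ →
      X ≤ (((∫ x, Gk M K δ x ∂((μ : Measure ℂ).prod (μ : Measure ℂ))) / 2 + 2 * Real.exp (-K) : ℝ) : EReal)) :
    X ≤ -((2 : EReal)⁻¹ * doubleInt (μ : Measure ℂ)) := by
  set ν := (μ : Measure ℂ).prod (μ : Measure ℂ) with hν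
  have e2 : (2 : EReal)⁻¹ = ((2⁻¹ : ℝ) : EReal) := by
    rw [EReal.coe_inv]; rfl
  rw [doubleInt, ← hν]
  set f : ℂ × ℂ → ℝ := fun q => fker q.1 q.2 with hf
  have hfm : Measurable f := fker_meas
  set A := ∫⁻ q : ℂ × ℂ, ENNReal.ofReal (-(f q)) ∂ν with hA
  set B := ∫⁻ q : ℂ × ℂ, ENNReal.ofReal (f q) ∂ν with hB
  change X ≤ -((2 : EReal)⁻¹ * ((B : EReal) - (A : EReal)))
  by_cases hAt : A = ⊤
  · rw [hAt, EReal.coe_ennreal_top, sub_eq_add_neg, EReal.neg_top, EReal.add_bot, e2,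
      EReal.coe_mul_bot_of_pos (by norm_num), EReal.neg_bot]
    exact le_top
  -- truncated positive part
  set b : ℕ → ℝ := fun m => ∫ q, min (max (f q) 0) (m:ℝ) ∂ν with hb
  have hbi : ∀ m : ℕ, Integrable (fun q => min (max (f q) 0) (m:ℝ)) ν := by
    intro m
    refine Integrable.of_bound ((hfm.max measurable_const).min measurable_const).aestronglyMeasurable (m:ℝ) (ae_of_all _ fun q => ?_)
    rw [Real.norm_eq_abs, abs_of_nonneg (le_min (le_max_right _ _) (Nat.cast_nonneg m))]
    exact min_le_right _ _
  have hb0 : ∀ m, 0 ≤ b m := fun m => integral_nonneg fun q => le_min (le_max_right _ _) (Nat.cast_nonneg m)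
  have hbl : ∀ m, ENNReal.ofReal (b m) = ∫⁻ q, ENNReal.ofReal (min (max (f q) 0) (m:ℝ)) ∂ν := fun m =>
    ofReal_integral_eq_lintegral_ofReal (hbi m) (ae_of_all _ fun q => le_min (le_max_right _ _) (Nat.cast_nonneg m))
  have hbt : Tendsto (fun m => ENNReal.ofReal (b m)) atTop (nhds B) := by
    simp only [hbl]
    refine lintegral_tendsto_of_tendsto_of_monotone (fun m => ?_) (ae_of_all _ fun q => ?_) (ae_of_all _ fun q => ?_)
    · exact (((hfm.max measurable_const).min measurable_const).ennreal_ofReal).aemeasurable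
    · intro m m' hmm
      exact ENNReal.ofReal_le_ofReal (min_le_min le_rfl (by exact_mod_cast hmm))
    · refine tendsto_const_nhds.congr' ?_
      filter_upwards [eventually_ge_atTop (Nat.ceil (max (f q) 0))] with m hm
      rw [min_eq_left (Nat.ceil_le.1 hm)]
      rcases le_total (f q) 0 with h0 | h0
      · rw [max_eq_right h0, ENNReal.ofReal_of_nonpos h0, ENNReal.ofReal_zero]
      · rw [max_eq_left h0]
  have hAi : Integrable (fun q => max (-(f q)) 0) ν := by
    refine ⟨(hfm.neg.max measurable_const).aestronglyMeasurable, ?_⟩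
    rw [hasFiniteIntegral_iff_ofReal (f := fun q => max (-(f q)) 0) (ae_of_all _ fun q => le_max_right _ _)]
    refine lt_of_le_of_lt (le_of_eq ?_) (lt_top_iff_ne_top.2 hAt)
    refine lintegral_congr fun q => ?_
    rw [ENNReal.ofReal_max]; simp
  set a := ∫ q, max (-(f q)) 0 ∂ν with ha
  have ha0 : 0 ≤ a := integral_nonneg fun q => le_max_right _ _
  have haA : ENNReal.ofReal a = A := by
    rw [ha, ofReal_integral_eq_lintegral_ofReal hAi (ae_of_all _ fun q => le_max_right _ _)]
    refine lintegral_congr fun q => ?_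
    rw [ENNReal.ofReal_max]; simp
  have hXm : ∀ m : ℕ, X ≤ (((a - b m) / 2 : ℝ) : EReal) := by
    intro m
    have hK : ∀ k : ℕ, X ≤ (((a - b m) / 2 + 2 * Real.exp (-(k:ℝ)) : ℝ) : EReal) := by
      intro k
      have ht := Gk_tendsto μ h m k (Nat.cast_nonneg m) (Nat.cast_nonneg k)
      have h1 : ∫ x, Gk m k 0 x ∂ν ≤ a - b m := by
        rw [ha, hb, ← integral_sub hAi (hbi m)]
        refine integral_mono_ae ?_ (hAi.sub (hbi m)) ?_
        · refine Integrable.of_bound (C := (m:ℝ) + k) ?_ ?_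
          · refine Measurable.aestronglyMeasurable ?_
            unfold Gk exK rat
            refine Real.measurable_log.comp ?_
            fun_prop
          · filter_upwards [ae_ne_one μ h] with q hq
            have hp1 : 0 < ‖1 - q.1‖ := norm_pos_iff.2 (sub_ne_zero.2 hq.1.symm)
            have hp2 : 0 < ‖1 - q.2‖ := norm_pos_iff.2 (sub_ne_zero.2 hq.2.symm)
            have hden : 0 < max (‖1 - q.1‖ * ‖1 - q.2‖) ((‖q.1 - q.2‖ + 0) * Real.exp (-(k:ℝ))) :=
              lt_of_lt_of_le (mul_pos hp1 hp2) (le_max_left _ _)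
            have hup : Gk m k 0 q ≤ k := by
              rw [Gk, Real.log_le_iff_le_exp (exK_pos _ _ _ _)]
              refine max_le (Real.exp_le_exp.2 (by linarith [(Nat.cast_nonneg m : (0:ℝ) ≤ m), (Nat.cast_nonneg k : (0:ℝ) ≤ k)])) ?_
              rw [rat, div_le_iff₀ hden]
              calc ‖q.1 - q.2‖ + 0 = Real.exp k * ((‖q.1 - q.2‖ + 0) * Real.exp (-(k:ℝ))) := by
                    rw [mul_left_comm, ← Real.exp_add]; simp
                _ ≤ _ := mul_le_mul_of_nonneg_left (le_max_right _ _) (Real.exp_pos _).le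
            rw [Real.norm_eq_abs, abs_le]
            have := Gk_ge m k 0 q
            have hm0 : (0:ℝ) ≤ m := Nat.cast_nonneg m
            have hk0 : (0:ℝ) ≤ k := Nat.cast_nonneg k
            constructor <;> linarith
        · filter_upwards [ae_ne_one μ h] with q hq
          exact Gk_zero_le m k (Nat.cast_nonneg m) q hq.1 hq.2
      have h2 : X ≤ (((∫ x, Gk m k 0 x ∂ν) / 2 + 2 * Real.exp (-(k:ℝ)) : ℝ) : EReal) := by
        refine ge_of_tendsto' (continuous_coe_real_ereal.tendsto _ |>.comp ((ht.div_const 2).add_const _)) fun j => ?_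
        exact hX m k _ (Nat.cast_nonneg m) (Nat.cast_nonneg k) (by positivity)
      refine h2.trans ?_
      rw [EReal.coe_le_coe_iff]
      linarith
    have ht : Tendsto (fun k : ℕ => (a - b m) / 2 + 2 * Real.exp (-(k:ℝ))) atTop (nhds ((a - b m) / 2 + 2 * 0)) := by
      refine tendsto_const_nhds.add (Tendsto.const_mul 2 ?_)
      exact Real.tendsto_exp_neg_atTop_nhds_zero.comp tendsto_natCast_atTop_atTop
    have := ge_of_tendsto' ((continuous_coe_real_ereal.tendsto _).comp ht) hK
    simpa using this
  have hAe : (A : EReal) = (a : EReal) := by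
    rw [← haA, EReal.coe_ennreal_ofReal, max_eq_left ha0]
  by_cases hBt : B = ⊤
  · rw [hBt] at hbt
    have hbot : X = ⊥ := by
      rw [EReal.eq_bot_iff_forall_lt]
      intro z
      have := (ENNReal.tendsto_nhds_top_iff_nnreal.1 hbt (Real.toNNReal (a - 2 * z + 1))).exists
      obtain ⟨m, hm⟩ := this
      have hm' : a - 2 * z + 1 < b m := by
        have : ENNReal.ofReal (a - 2 * z + 1) < ENNReal.ofReal (b m) := hm
        exact lt_of_not_ge fun hle => absurd (ENNReal.ofReal_le_ofReal hle) (not_le.2 this)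
      refine lt_of_le_of_lt (hXm m) ?_
      rw [EReal.coe_lt_coe_iff]
      linarith
    rw [hbot]; exact bot_le
  · have hBe : (B : EReal) = ((B.toReal : ℝ) : EReal) := (EReal.coe_ennreal_toReal hBt).symm
    rw [hBe, hAe, e2, ← EReal.coe_sub, ← EReal.coe_mul, ← EReal.coe_neg]
    have ht : Tendsto b atTop (nhds B.toReal) := by
      have := (ENNReal.tendsto_toReal hBt).comp hbt
      refine this.congr fun m => ?_
      simp [ENNReal.toReal_ofReal (hb0 m)]
    have ht2 : Tendsto (fun m => (a - b m) / 2) atTop (nhds ((a - B.toReal) / 2)) :=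
      (tendsto_const_nhds.sub ht).div_const 2
    have := ge_of_tendsto' ((continuous_coe_real_ereal.tendsto _).comp ht2) hXm
    refine this.trans (le_of_eq ?_)
    congr 1; ring

end Lim

/-- Local upper bound: for every `μ ∈ 𝒫`,
`lim_{ε→0} limsup_n (1/n²) log P(d(L_n, μ) ≤ ε) ≤ -(1/2)∬ f dμ dμ`,
where `d` is the Lévy–Prokhorov metric; since the inner `limsup` is monotone in
`ε`, the limit as `ε → 0⁺` is the infimum over `ε > 0`. -/
theorem local_upper_bound
    {Ω : Type*} [MeasurableSpace Ω] (P : Measure Ω) [IsProbabilityMeasure P]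
    (ξ : ℕ → Ω → ℝ) (hmeas : ∀ j, Measurable (ξ j))
    (hindep : iIndepFun ξ P)
    (hdist : ∀ j, Measure.map (ξ j) P = ProbabilityTheory.expMeasure 1)
    (Ln : ℕ → Ω → ProbabilityMeasure ℂ)
    (hLn : ∀ n, 1 ≤ n → ∀ ω, (∀ j, 0 < ξ j ω) →
      (Ln n ω : Measure ℂ) = zeroMeasure (randPoly ξ n ω)) :
    ∀ μ ∈ calP,
      (⨅ (ε : ℝ) (_ : 0 < ε),
          atTop.limsup (fun n : ℕ =>
            ((((n : ℝ) ^ 2)⁻¹ : ℝ) : EReal) *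
              ENNReal.log (P {ω |
                levyProkhorovDist (Ln n ω : Measure ℂ) (μ : Measure ℂ) ≤ ε}))) ≤
        -((2 : EReal)⁻¹ * doubleInt (μ : Measure ℂ)) := by
  intro μ hμ
  refine final_lim μ (calP_one μ hμ) _ fun M K δ hM hK hδ => ?_
  exact upper_step P ξ hmeas hindep hdist Ln hLn μ hδ hM hK
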